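/- arXiv:2102.07080 — 2 statements merged into one kernel-verified Lean document; each statement's English description precedes it below -/
import Mathlib

section
/- Let 𝔞 be a cofinite monomial ideal in k[x₁,…,x_d] and let c > 0 be a rational number. Then there exists a polynomial p ∈ ℚ[X] of degree at most d−1 such that m(c+n) = p(n) for every natural number n. (Monomial case of Theorem 3.1: the multiplicity function n ↦ m(c+n) is a polynomial in n of degree less than d.) -/
open Set Filter Pointwise

/-- The map sending a vector of natural number exponents to the corresponding
real vector. -/
noncomputable def expToReal (d : ℕ) (v : Fin d → ℕ) : Fin d → ℝ := fun i => (v i : ℝ)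

/-- The Newton polyhedron of a monomial ideal with exponent set `S`:
the convex hull in `ℝ^d` of the exponent vectors. -/
noncomputable def newtonPoly (d : ℕ) (S : Set (Fin d → ℕ)) : Set (Fin d → ℝ) :=
  convexHull ℝ (expToReal d '' S)

/-- The multiplicity `m(c)` of `c > 0` as a (candidate) jumping number of the monomial
ideal with exponent set `S`: the number of `v ∈ ℕ^d` with `v + 𝟏` on the boundary part
`c•P(𝔞) \ int(c•P(𝔞))` of the dilated Newton polyhedron. -/
noncomputable def multJump (d : ℕ) (S : Set (Fin d → ℕ)) (c : ℝ) : ℕ :=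
  Nat.card {v : Fin d → ℕ |
    expToReal d v + 1 ∈ c • newtonPoly d S \ interior (c • newtonPoly d S)}

/-!
Finitely many exponents `w i` generate the Newton polyhedron `P`, in the sense that `x ∈ t • P` if
and only if `x` is a nonnegative combination of the `w i` with coefficient sum at least `t`. Hence
`v + 𝟏` lies on the boundary of `c • P` exactly when `c` is the largest coefficient sum of such a
representation. Breaking ties lexicographically singles out one optimal coefficient vector `a` for
each point. Since optimality depends only on the support of `a`, and the generators indexed by this
support are linearly independent, the optimal vectors form a finite union of open simplicial cones
of dimension at most `d`.

Splitting an optimal vector into an integral part and a remainder in `(0, 1]` on its support turns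
the count over each cone into finitely many stars and bars problems: the number of vectors
`u ∈ ℕ^σ` with sum `n + r`. This is a polynomial in `n` of degree less than `|σ| ≤ d` as soon as
`r > -|σ|`, and the remainders satisfy this bound because their coordinates are at most `1`.
-/

section Counting

variable {ι : Type*}

theorem exists_polynomial_eval_eq_choose (e k : ℕ) :
    ∃ p ∈ Polynomial.degreeLT ℚ (k + 1), ∀ n : ℕ, p.eval (n : ℚ) = (n + e).choose k := by
  refine ⟨Polynomial.C (k.factorial : ℚ)⁻¹ *
    (descPochhammer ℚ k).comp (Polynomial.X + Polynomial.C (e : ℚ)), ?_, fun n => ?_⟩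
  · rw [Polynomial.degreeLT_succ_eq_degreeLE, Polynomial.mem_degreeLE,
      ← Polynomial.natDegree_le_iff_degree_le]
    refine (Polynomial.natDegree_C_mul_le _ _).trans ?_
    rw [Polynomial.natDegree_comp, descPochhammer_natDegree, Polynomial.natDegree_X_add_C, mul_one]
  · rw [Polynomial.eval_C_mul, Polynomial.eval_comp, Polynomial.eval_add, Polynomial.eval_X,
      Polynomial.eval_C, ← Nat.cast_add, descPochhammer_eval_eq_descFactorial,
      Nat.descFactorial_eq_factorial_mul_choose, Nat.cast_mul,
      inv_mul_cancel_left₀ (Nat.cast_ne_zero.2 k.factorial_ne_zero)]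

theorem exists_polynomial_eval_eq_multichoose {k : ℕ} {j : ℤ} (hj : -k < j) :
    ∃ p ∈ Polynomial.degreeLT ℚ k, ∀ n : ℕ,
      (∀ m : ℕ, m = n + j → p.eval (n : ℚ) = k.multichoose m) ∧
        (n + j < 0 → p.eval (n : ℚ) = 0) := by
  cases k with
  | zero =>
    refine ⟨0, zero_mem _, fun n => ⟨fun m hm => ?_, fun _ => Polynomial.eval_zero⟩⟩
    obtain ⟨m, rfl⟩ := Nat.exists_eq_succ_of_ne_zero (n := m) (by grind)
    rw [Polynomial.eval_zero, Nat.succ_eq_add_one, Nat.multichoose_zero_succ, Nat.cast_zero]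
  | succ k =>
    obtain ⟨e, he⟩ : ∃ e : ℕ, (e : ℤ) = j + k := ⟨(j + k).toNat, by grind⟩
    obtain ⟨p, hp, hpn⟩ := exists_polynomial_eval_eq_choose e k
    refine ⟨p, hp, fun n => ⟨fun m hm => ?_, fun hn => ?_⟩⟩
    · have hne : n + e = m + k := by grind
      rw [hpn, hne, Nat.multichoose_eq, Nat.add_right_comm, Nat.add_sub_cancel, Nat.add_comm k m,
        Nat.choose_symm_add]
    · rw [hpn, Nat.choose_eq_zero_of_lt (by grind), Nat.cast_zero]

theorem ncard_nat_sum_eq_multichoose [Fintype ι] (σ : Finset ι) (m : ℕ) :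
    {u : ι → ℕ | (∀ i ∉ σ, u i = 0) ∧ ∑ i, u i = m}.ncard = σ.card.multichoose m := by
  classical
  have heq : {u : ι → ℕ | (∀ i ∉ σ, u i = 0) ∧ ∑ i, u i = m} = Finset.piAntidiag σ m := by
    ext u
    simp only [mem_ofPred_eq, Finset.mem_coe, Finset.mem_piAntidiag, ne_eq, not_imp_comm]
    rw [and_comm]
    refine and_congr_left fun hu => ?_
    rw [Finset.sum_subset (Finset.subset_univ σ) fun i _ hi => hu i hi]
  rw [heq, Set.ncard_coe_finset, ← Finset.card_finsuppAntidiag_nat_eq_multichoose,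
    Finset.finsuppAntidiag, Finset.card_map, Finset.card_attach]

theorem exists_polynomial_ncard_nat_sum_eq [Fintype ι] (σ : Finset ι) {r : ℝ} (hr : -σ.card < r) :
    ∃ p ∈ Polynomial.degreeLT ℚ σ.card, ∀ n : ℕ,
      ({u : ι → ℕ | (∀ i ∉ σ, u i = 0) ∧ ∑ i, (u i : ℝ) = n + r}.ncard : ℚ) =
        p.eval (n : ℚ) := by
  by_cases hint : ∃ j : ℤ, r = j
  · obtain ⟨j, rfl⟩ := hint
    obtain ⟨p, hp, hpn⟩ := exists_polynomial_eval_eq_multichoose (k := σ.card) (j := j)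
      (by exact_mod_cast hr)
    refine ⟨p, hp, fun n => ?_⟩
    have hcast : ∀ u : ι → ℕ, ∑ i, (u i : ℝ) = n + j ↔ ((∑ i, u i : ℕ) : ℤ) = n + j :=
      fun u => by exact_mod_cast Iff.rfl
    simp only [hcast]
    rcases lt_or_ge (n + j) 0 with hneg | hnonneg
    · have hempty : {u : ι → ℕ | (∀ i ∉ σ, u i = 0) ∧ ((∑ i, u i : ℕ) : ℤ) = n + j} = ∅ :=
        Set.eq_empty_of_forall_notMem fun u hu => by grind
      rw [hempty, Set.ncard_empty, Nat.cast_zero, (hpn n).2 hneg]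
    · obtain ⟨m, hm⟩ := Int.eq_ofNat_of_zero_le hnonneg
      simp only [hm, Nat.cast_inj]
      rw [ncard_nat_sum_eq_multichoose, (hpn n).1 m hm.symm]
  · have hempty : ∀ n : ℕ, {u : ι → ℕ | (∀ i ∉ σ, u i = 0) ∧ ∑ i, (u i : ℝ) = n + r} = ∅ :=
      fun n => Set.eq_empty_of_forall_notMem fun u hu =>
        hint ⟨∑ i, (u i : ℤ) - n, by push_cast; linarith [hu.2]⟩
    exact ⟨0, zero_mem _, fun n => by simp [hempty]⟩

theorem finite_setOf_nat_sum_eq [Fintype ι] (r : ℝ) :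
    {u : ι → ℕ | ∑ i, (u i : ℝ) = r}.Finite := by
  classical
  refine (Set.finite_Iic fun _ => ⌈r⌉₊).subset fun u hu i => ?_
  have hle : (u i : ℝ) ≤ r := hu ▸ Finset.single_le_sum (f := fun i => (u i : ℝ))
    (fun _ _ => Nat.cast_nonneg _) (Finset.mem_univ i)
  exact_mod_cast hle.trans (Nat.le_ceil r)

/-- The integral part of a nonnegative vector for which the complementary fractional part lies in
`(0, 1]` at each nonzero coordinate. Truncated subtraction gives `0` at the zero coordinates. -/
noncomputable def boxIndex (a : ι → ℝ) : ι → ℕ := fun i => ⌈a i⌉₊ - 1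

theorem boxIndex_add_natCast {b : ι → ℝ} (hb : b ∈ Icc 0 1) {u : ι → ℕ}
    (hu : ∀ i, b i = 0 → u i = 0) : boxIndex (b + fun i => (u i : ℝ)) = u := by
  funext i
  rcases (hb.1 i).eq_or_lt with hbi | hbi
  · simp [boxIndex, ← hbi, hu i hbi.symm]
  · have hceil : ⌈b i⌉₊ = 1 :=
      (Nat.ceil_eq_iff one_ne_zero).2 ⟨by simpa using hbi, by simpa using hb.2 i⟩
    simp [boxIndex, Nat.ceil_add_natCast hbi.le, hceil]

theorem sub_boxIndex_mem_Icc {a : ι → ℝ} (ha : 0 ≤ a) :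
    a - (fun i => (boxIndex a i : ℝ)) ∈ Icc 0 1 := by
  have hle : ∀ i, (boxIndex a i : ℝ) ≤ a i := fun i => by
    rcases Nat.eq_zero_or_pos ⌈a i⌉₊ with hceil | hceil
    · simpa [boxIndex, hceil] using ha i
    · exact (Nat.lt_ceil.1 (Nat.sub_one_lt_of_lt hceil)).le
  have hge : ∀ i, a i ≤ boxIndex a i + 1 := fun i => by
    refine (Nat.le_ceil (a i)).trans ?_
    exact_mod_cast Nat.sub_le_iff_le_add.1 (le_refl (⌈a i⌉₊ - 1))
  exact ⟨fun i => sub_nonneg.2 (hle i), fun i => sub_le_iff_le_add'.2 (hge i)⟩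

theorem boxIndex_eq_zero_of_eq {a : ι → ℝ} {i : ι} (ha : a i = boxIndex a i) :
    boxIndex a i = 0 := by
  have hceil : ⌈a i⌉₊ = boxIndex a i := by rw [ha, Nat.ceil_natCast]
  simp only [boxIndex] at hceil ⊢
  omega

theorem card_sum_eq_sum_box [Fintype ι] {A : Set (ι → ℝ)} (hnonneg : ∀ a ∈ A, 0 ≤ a)
    (hadd : ∀ a : ι → ℝ, 0 ≤ a → ∀ u : ι → ℕ, (∀ i, a i = 0 → u i = 0) →
      ((a + fun i => (u i : ℝ)) ∈ A ↔ a ∈ A))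
    [Fintype ↥(A ∩ Iic 1)] (r : ℝ) :
    Nat.card {a | a ∈ A ∧ ∑ i, a i = r} = ∑ b : ↥(A ∩ Iic 1),
      {u : ι → ℕ | (∀ i, b.1 i = 0 → u i = 0) ∧ ∑ i, (u i : ℝ) = r - ∑ i, b.1 i}.ncard := by
  let U (b : ↥(A ∩ Iic 1)) : Set (ι → ℕ) :=
    {u | (∀ i, b.1 i = 0 → u i = 0) ∧ ∑ i, (u i : ℝ) = r - ∑ i, b.1 i}
  have hbox : ∀ b : ↥(A ∩ Iic 1), b.1 ∈ Icc 0 1 := fun b => ⟨hnonneg _ b.2.1, b.2.2⟩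
  have : ∀ b, Finite (U b) := fun b => (finite_setOf_nat_sum_eq _).subset fun u hu => hu.2
  let translate : (Σ b, U b) → {a | a ∈ A ∧ ∑ i, a i = r} := fun q =>
    ⟨q.1.1 + fun i => (q.2.1 i : ℝ), (hadd _ (hbox q.1).1 _ q.2.2.1).2 q.1.2.1, by
      simp only [Pi.add_apply, Finset.sum_add_distrib, q.2.2.2, add_sub_cancel]⟩
  have hinj : Function.Injective translate := by
    rintro ⟨b, u, hu⟩ ⟨b', u', hu'⟩ h
    replace h := congrArg Subtype.val h
    obtain rfl : u = u' := by
      rw [← boxIndex_add_natCast (hbox b) hu.1, ← boxIndex_add_natCast (hbox b') hu'.1]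
      exact congrArg boxIndex h
    obtain rfl : b = b' := Subtype.ext (add_right_cancel h)
    rfl
  have hsurj : Function.Surjective translate := by
    rintro ⟨a, haA, har⟩
    have hbox' := sub_boxIndex_mem_Icc (hnonneg a haA)
    have hsupp : ∀ i, a i - boxIndex a i = 0 → boxIndex a i = 0 :=
      fun i hi => boxIndex_eq_zero_of_eq (sub_eq_zero.1 hi)
    have hmem : a - (fun i => (boxIndex a i : ℝ)) ∈ A :=
      (hadd _ hbox'.1 _ hsupp).1 (by rwa [sub_add_cancel])
    refine ⟨⟨⟨_, hmem, hbox'.2⟩, boxIndex a, hsupp, ?_⟩, Subtype.ext (sub_add_cancel _ _)⟩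
    simp only [Pi.sub_apply, Finset.sum_sub_distrib, har, sub_sub_cancel]
  exact (Nat.card_eq_of_bijective translate ⟨hinj, hsurj⟩).symm.trans Nat.card_sigma

theorem exists_polynomial_card_sum_eq [Fintype ι] {A : Set (ι → ℝ)} (hnonneg : ∀ a ∈ A, 0 ≤ a)
    (hadd : ∀ a : ι → ℝ, 0 ≤ a → ∀ u : ι → ℕ, (∀ i, a i = 0 → u i = 0) →
      ((a + fun i => (u i : ℝ)) ∈ A ↔ a ∈ A))
    (hfin : (A ∩ Iic 1).Finite) {d : ℕ} (hcard : ∀ a ∈ A, (Function.support a).ncard ≤ d)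
    {c : ℝ} (hc : 0 < c) :
    ∃ p ∈ Polynomial.degreeLT ℚ d, ∀ n : ℕ,
      (Nat.card {a | a ∈ A ∧ ∑ i, a i = c + n} : ℚ) = p.eval (n : ℚ) := by
  classical
  have := hfin.fintype
  have hpoly (b : ↥(A ∩ Iic 1)) : ∃ p ∈ Polynomial.degreeLT ℚ d, ∀ n : ℕ,
      ({u : ι → ℕ | (∀ i, b.1 i = 0 → u i = 0) ∧
        ∑ i, (u i : ℝ) = c + n - ∑ i, b.1 i}.ncard : ℚ) = p.eval (n : ℚ) := by
    obtain ⟨σ, hσ⟩ : ∃ σ : Finset ι, (σ : Set ι) = Function.support b.1 :=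
      ⟨_, Set.coe_toFinset _⟩
    have hmem : ∀ i, i ∉ σ ↔ b.1 i = 0 := fun i => by
      rw [← Finset.mem_coe, hσ, Function.notMem_support]
    have hσd : σ.card ≤ d := by
      rw [← Set.ncard_coe_finset, hσ]
      exact hcard b.1 b.2.1
    have hsum : ∑ i, b.1 i ≤ σ.card := by
      rw [← Finset.sum_subset (Finset.subset_univ σ) fun i _ hi => (hmem i).1 hi]
      simpa using Finset.sum_le_card_nsmul σ b.1 1 fun i _ => b.2.2 i
    obtain ⟨p, hp, hpn⟩ := exists_polynomial_ncard_nat_sum_eq σ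
      (r := c - ∑ i, b.1 i) (by linarith)
    refine ⟨p, Polynomial.degreeLT_mono hσd hp, fun n => ?_⟩
    simp only [← hpn, hmem, add_comm c (n : ℝ), add_sub_assoc]
  choose p hp hpn using hpoly
  refine ⟨∑ b, p b, Submodule.sum_mem _ fun b _ => hp b, fun n => ?_⟩
  rw [card_sum_eq_sum_box hnonneg hadd, Polynomial.eval_finsetSum, Nat.cast_sum]
  exact Finset.sum_congr rfl fun b _ => hpn b n

end Counting

section Lexicographic

variable {ι E F : Type*}

theorem list_cons_le_cons_iff {α : Type*} [LinearOrder α] {a b : α} {l m : List α} :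
    a :: l ≤ b :: m ↔ a < b ∨ a = b ∧ l ≤ m := by
  rw [← not_lt, List.cons_lt_cons_iff]
  grind

theorem exists_isMaxOn_listMap_of_isCompact [TopologicalSpace E] [FunLike F E ℝ]
    [ContinuousMapClass F E ℝ] (l : List F) {K : Set E} (hK : IsCompact K) (hne : K.Nonempty) :
    ∃ a ∈ K, IsMaxOn (fun x => l.map (· x)) K a := by
  induction l generalizing K with
  | nil => exact hne.imp fun a ha => ⟨ha, isMaxOn_const⟩
  | cons f l ih =>
    obtain ⟨m, hm, hmax⟩ := hK.exists_isMaxOn hne (map_continuous f).continuousOn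
    obtain ⟨a, ⟨haK, ham⟩, ha⟩ :=
      ih (hK.inter_right (isClosed_singleton.preimage (map_continuous f))) ⟨m, hm, mem_singleton _⟩
    replace ham : f a = f m := ham
    refine ⟨a, haK, fun b hb => list_cons_le_cons_iff.2 ?_⟩
    simp only [ham]
    exact (hmax hb).lt_or_eq.imp_right fun h => ⟨h, ha ⟨hb, h⟩⟩

theorem listMap_le_of_listMap_add_smul_sub_le [AddCommGroup E] [Module ℝ E] [FunLike F E ℝ]
    [LinearMapClass F ℝ E ℝ] {l : List F} {a a' b : E} {ε : ℝ} (hε : 0 < ε)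
    (h : l.map (· (a + ε • (b - a'))) ≤ l.map (· a)) : l.map (· b) ≤ l.map (· a') := by
  induction l with
  | nil => exact le_rfl
  | cons f l ih =>
    simp only [List.map_cons, list_cons_le_cons_iff, map_add f, map_smul f, map_sub f,
      add_lt_iff_neg_left, add_eq_left, smul_neg_iff_of_pos_left hε, smul_eq_zero, hε.ne', false_or,
      sub_neg, sub_eq_zero] at h ⊢
    exact h.imp_right fun h => ⟨h.1, ih h.2⟩

theorem exists_pos_smul_le [Finite ι] {a b : ι → ℝ} (ha : 0 ≤ a) (hsupp : ∀ i, a i = 0 → b i = 0) :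
    ∃ ε : ℝ, 0 < ε ∧ ε • b ≤ a := by
  have hcoord : ∀ i, ∀ᶠ ε : ℝ in nhdsWithin 0 (Ioi 0), ε * b i ≤ a i := fun i => by
    rcases (ha i).eq_or_lt with hai | hai
    · simp [hsupp i hai.symm, ← hai]
    · have hlim : Tendsto (fun ε : ℝ => ε * b i) (nhds 0) (nhds 0) :=
        (continuous_mul_const (b i)).tendsto' 0 0 (zero_mul _)
      exact ((hlim.mono_left nhdsWithin_le_nhds).eventually_lt_const hai).mono fun _ => le_of_lt
  obtain ⟨ε, hle, hε⟩ := ((eventually_all.2 hcoord).and self_mem_nhdsWithin).exists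
  exact ⟨ε, hε, hle⟩

variable [Fintype ι]

/-- The coordinate sum, followed by the coordinates in some order: the functionals used to select
one of the nonnegative vectors with a given image. -/
noncomputable def lexFunctionals (ι : Type*) [Fintype ι] : List ((ι → ℝ) →L[ℝ] ℝ) :=
  (∑ i, ContinuousLinearMap.proj i) :: Finset.univ.toList.map fun i => ContinuousLinearMap.proj i

/-- The vector of values of `lexFunctionals`; lists of reals are ordered lexicographically. -/
noncomputable def lexKey (a : ι → ℝ) : List ℝ := (lexFunctionals ι).map (· a)

theorem lexKey_eq_cons (a : ι → ℝ) : lexKey a = (∑ i, a i) :: Finset.univ.toList.map a := by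
  simp [lexKey, lexFunctionals, Function.comp_def]

theorem lexKey_injective : Function.Injective (lexKey : (ι → ℝ) → List ℝ) := fun a b h => by
  rw [lexKey_eq_cons, lexKey_eq_cons] at h
  funext i
  exact List.map_inj_left.1 (List.cons_eq_cons.1 h).2 i (by simp)

theorem sum_le_sum_of_lexKey_le {a b : ι → ℝ} (h : lexKey b ≤ lexKey a) :
    ∑ i, b i ≤ ∑ i, a i := by
  rw [lexKey_eq_cons, lexKey_eq_cons, list_cons_le_cons_iff] at h
  exact h.elim le_of_lt fun h => h.1.le

variable [AddCommGroup E] [Module ℝ E] {L : (ι → ℝ) →ₗ[ℝ] E} {a b : ι → ℝ}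

/-- `a` is lexicographically maximal, for `lexKey`, among the nonnegative vectors with the same
image under `L`. -/
def IsLexMax (L : (ι → ℝ) →ₗ[ℝ] E) (a : ι → ℝ) : Prop :=
  0 ≤ a ∧ ∀ b, 0 ≤ b → L b = L a → lexKey b ≤ lexKey a

namespace IsLexMax

theorem eq_of_map_eq (ha : IsLexMax L a) (hb : IsLexMax L b) (h : L a = L b) : a = b :=
  lexKey_injective (le_antisymm (hb.2 a ha.1 h) (ha.2 b hb.1 h.symm))

theorem sum_le_sum (ha : IsLexMax L a) (hb : 0 ≤ b) (h : L b = L a) : ∑ i, b i ≤ ∑ i, a i :=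
  sum_le_sum_of_lexKey_le (ha.2 b hb h)

-- If `b` beat `a'` over the image of `a'`, then `a + ε • (b - a')` would beat `a` over that of `a`.
theorem of_support (ha : IsLexMax L a) {a' : ι → ℝ} (ha' : 0 ≤ a')
    (hsupp : ∀ i, a i = 0 → a' i = 0) : IsLexMax L a' := by
  refine ⟨ha', fun b hb hLb => ?_⟩
  obtain ⟨ε, hε, hle⟩ := exists_pos_smul_le ha.1 hsupp
  refine listMap_le_of_listMap_add_smul_sub_le hε (ha.2 _ ?_ ?_)
  · calc 0 ≤ (a - ε • a') + ε • b := add_nonneg (sub_nonneg.2 hle) (smul_nonneg hε.le hb)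
      _ = a + ε • (b - a') := by rw [smul_sub]; abel
  · simp [hLb]

theorem eq_zero_of_map_eq_zero (ha : IsLexMax L a) {g : ι → ℝ} (hg : L g = 0)
    (hsupp : ∀ i, a i = 0 → g i = 0) : g = 0 := by
  have habs : IsLexMax L |g| := ha.of_support (abs_nonneg g) fun i hi => by simp [hsupp i hi]
  have hadd : IsLexMax L (|g| + g) :=
    ha.of_support (neg_le_iff_add_nonneg.1 (neg_le_abs g)) fun i hi => by simp [hsupp i hi]
  exact left_eq_add.1 (habs.eq_of_map_eq hadd (by rw [map_add, hg, add_zero]))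

theorem ncard_support_le_finrank [FiniteDimensional ℝ E] (ha : IsLexMax L a) :
    (Function.support a).ncard ≤ Module.finrank ℝ E := by
  classical
  have hker : LinearMap.ker
      (L ∘ₗ Function.ExtendByZero.linearMap ℝ ((↑) : Function.support a → ι)) = ⊥ := by
    refine LinearMap.ker_eq_bot'.2 fun g hg => ?_
    have hsupp : ∀ i, a i = 0 → Function.extend ((↑) : Function.support a → ι) g 0 i = 0 :=
      fun i hi => Function.extend_apply' _ _ _ fun ⟨j, hj⟩ => j.2 (hj ▸ hi)
    have hzero : Function.extend ((↑) : Function.support a → ι) g 0 = 0 :=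
      ha.eq_zero_of_map_eq_zero hg hsupp
    funext i
    rw [← Subtype.val_injective.extend_apply g 0 i, hzero, Pi.zero_apply, Pi.zero_apply]
  rw [← Nat.card_coe_set_eq, Nat.card_eq_fintype_card, ← Module.finrank_fintype_fun_eq_card ℝ]
  exact LinearMap.finrank_le_finrank_of_injective (LinearMap.ker_eq_bot.1 hker)

end IsLexMax

theorem exists_isLexMax_of_isCompact (ha : 0 ≤ a)
    (hK : IsCompact {b | 0 ≤ b ∧ L b = L a}) : ∃ b, IsLexMax L b ∧ L b = L a := by
  obtain ⟨b, ⟨hb, hLb⟩, hmax⟩ :=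
    exists_isMaxOn_listMap_of_isCompact (lexFunctionals ι) hK ⟨a, ha, rfl⟩
  exact ⟨b, ⟨hb, fun b' hb' h => hmax ⟨hb', h.trans hLb⟩⟩, hLb⟩

end Lexicographic

section ConicMap

variable {ι : Type*} [Fintype ι] {d : ℕ}

/-- The linear map sending a vector of coefficients to the corresponding combination of the
exponent vectors `w i`. -/
noncomputable def conicMap (w : ι → Fin d → ℕ) : (ι → ℝ) →ₗ[ℝ] (Fin d → ℝ) :=
  Fintype.linearCombination ℝ fun i => expToReal d (w i)

theorem conicMap_apply (w : ι → Fin d → ℕ) (a : ι → ℝ) (j : Fin d) :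
    conicMap w a j = ∑ i, a i * w i j := by
  simp [conicMap, Fintype.linearCombination_apply, expToReal]

theorem conicMap_single [DecidableEq ι] (w : ι → Fin d → ℕ) (i : ι) (r : ℝ) :
    conicMap w (Pi.single i r) = r • expToReal d (w i) := by
  simp [conicMap, Fintype.linearCombination_apply_single]

theorem conicMap_natCast (w : ι → Fin d → ℕ) (u : ι → ℕ) :
    conicMap w (fun i => (u i : ℝ)) = expToReal d (∑ i, u i • w i) := by
  funext j
  simp [conicMap_apply, expToReal]

theorem monotone_conicMap (w : ι → Fin d → ℕ) : Monotone (conicMap w) := fun a b hab j => by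
  rw [conicMap_apply, conicMap_apply]
  exact Finset.sum_le_sum fun i _ => mul_le_mul_of_nonneg_right (hab i) (Nat.cast_nonneg _)

theorem conicMap_apply_eq_zero_of_support {w : ι → Fin d → ℕ} {a b : ι → ℝ} (ha : 0 ≤ a)
    (hsupp : ∀ i, a i = 0 → b i = 0) {j : Fin d} (hj : conicMap w a j = 0) :
    conicMap w b j = 0 := by
  rw [conicMap_apply] at hj ⊢
  have hterm := (Finset.sum_eq_zero_iff_of_nonneg fun i _ =>
    mul_nonneg (ha i) (Nat.cast_nonneg (w i j))).1 hj
  exact Finset.sum_eq_zero fun i hi =>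
    mul_eq_zero.2 ((mul_eq_zero.1 (hterm i hi)).imp_left (hsupp i))

theorem isCompact_setOf_conicMap_eq {w : ι → Fin d → ℕ} (hw : ∀ i, w i ≠ 0) (x : Fin d → ℝ) :
    IsCompact {a | 0 ≤ a ∧ conicMap w a = x} := by
  have hclosed : IsClosed {a | 0 ≤ a ∧ conicMap w a = x} :=
    isClosed_Ici.inter (isClosed_singleton.preimage (conicMap w).continuous_of_finiteDimensional)
  refine (isCompact_Icc (a := (0 : ι → ℝ)) (b := fun _ => ∑ j, x j)).of_isClosed_subset hclosed ?_
  rintro a ⟨ha, rfl⟩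
  refine ⟨ha, fun i => ?_⟩
  obtain ⟨j, hj⟩ := Function.ne_iff.1 (hw i)
  have hone : (1 : ℝ) ≤ w i j := by exact_mod_cast Nat.one_le_iff_ne_zero.2 hj
  have hterm : ∀ i j, 0 ≤ a i * (w i j : ℝ) := fun i j => mul_nonneg (ha i) (Nat.cast_nonneg _)
  calc a i ≤ a i * w i j := le_mul_of_one_le_right (ha i) hone
    _ ≤ conicMap w a j := by
        rw [conicMap_apply]
        exact Finset.single_le_sum (fun i _ => hterm i j) (Finset.mem_univ i)
    _ ≤ ∑ j, conicMap w a j := by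
        refine Finset.single_le_sum (fun j _ => ?_) (Finset.mem_univ j)
        rw [conicMap_apply]
        exact Finset.sum_nonneg fun i _ => hterm i j

/-- The lexicographically maximal coefficient vectors whose combination of the `w i` is a lattice
point with positive coordinates, that is, the point `v + 𝟏` attached to a monomial `x^v`. -/
def latticeLexMax (w : ι → Fin d → ℕ) : Set (ι → ℝ) :=
  {a | IsLexMax (conicMap w) a ∧ ∃ v : Fin d → ℕ, conicMap w a = expToReal d v + 1}

variable {w : ι → Fin d → ℕ}

theorem exists_eq_expToReal_add_one_iff {x : Fin d → ℝ} :
    (∃ v : Fin d → ℕ, x = expToReal d v + 1) ↔ ∀ j, 0 < x j ∧ ∃ z : ℤ, x j = z := by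
  refine ⟨?_, fun h => ?_⟩
  · rintro ⟨v, rfl⟩ j
    exact ⟨Nat.cast_add_one_pos (v j), v j + 1, by simp [expToReal]⟩
  · have hsucc : ∀ j, ∃ n : ℕ, x j = n + 1 := fun j => by
      obtain ⟨hpos, z, hz⟩ := h j
      have hzpos : 0 < z := by exact_mod_cast hz ▸ hpos
      obtain ⟨n, hn⟩ := Int.eq_succ_of_zero_lt hzpos
      exact ⟨n, by rw [hz, hn]; simp⟩
    choose v hv using hsucc
    exact ⟨v, funext hv⟩

theorem add_natCast_mem_latticeLexMax_iff {a : ι → ℝ} (ha : 0 ≤ a) {u : ι → ℕ}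
    (hu : ∀ i, a i = 0 → u i = 0) :
    (a + fun i => (u i : ℝ)) ∈ latticeLexMax w ↔ a ∈ latticeLexMax w := by
  have hadd : 0 ≤ a + fun i => (u i : ℝ) := add_nonneg ha fun i => Nat.cast_nonneg _
  have hsupp : ∀ i, (a + fun i => (u i : ℝ)) i = 0 ↔ a i = 0 := fun i => by
    simpa [add_eq_zero_iff_of_nonneg (ha i) (Nat.cast_nonneg _)] using hu i
  have hpos : ∀ j, 0 < conicMap w (a + fun i => (u i : ℝ)) j ↔ 0 < conicMap w a j := fun j => by
    have hnonneg : ∀ {b}, 0 ≤ b → 0 ≤ conicMap w b j := fun {b} hb => by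
      simpa using monotone_conicMap w hb j
    rw [(hnonneg ha).lt_iff_ne', (hnonneg hadd).lt_iff_ne']
    exact not_congr ⟨conicMap_apply_eq_zero_of_support hadd fun i => (hsupp i).1,
      conicMap_apply_eq_zero_of_support ha fun i => (hsupp i).2⟩
  have hint : ∀ j, (∃ z : ℤ, conicMap w (a + fun i => (u i : ℝ)) j = z) ↔
      ∃ z : ℤ, conicMap w a j = z := fun j => by
    rw [map_add, conicMap_natCast]
    refine ⟨fun ⟨z, hz⟩ => ⟨z - (∑ i, u i • w i) j, ?_⟩,
      fun ⟨z, hz⟩ => ⟨z + (∑ i, u i • w i) j, ?_⟩⟩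
    · rw [Int.cast_sub, ← hz]
      exact (add_sub_cancel_right _ _).symm
    · rw [Int.cast_add, ← hz]
      rfl
  refine and_congr ⟨fun h => h.of_support ha fun i => (hsupp i).1,
    fun h => h.of_support hadd fun i => (hsupp i).2⟩ ?_
  simp only [exists_eq_expToReal_add_one_iff, hpos, hint]

theorem finite_latticeLexMax_inter_Iic_one : (latticeLexMax w ∩ Iic 1).Finite := by
  have hinj : InjOn (conicMap w) (latticeLexMax w ∩ Iic 1) :=
    fun a ha b hb => ha.1.1.eq_of_map_eq hb.1.1
  have hfin := (finite_Iic (∑ i, w i)).image fun v => expToReal d v + 1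
  refine .of_finite_image (hfin.subset ?_) hinj
  rintro _ ⟨a, ⟨⟨-, v, hv⟩, ha1⟩, rfl⟩
  refine ⟨v, fun j => ?_, hv.symm⟩
  have hle := monotone_conicMap w ha1 j
  have hone : conicMap w 1 j = (∑ i, w i) j := by simp [conicMap_apply]
  rw [hv, hone] at hle
  have : (v j : ℝ) + 1 ≤ ((∑ i, w i) j : ℕ) := hle
  exact_mod_cast (lt_add_one _).le.trans this

theorem exists_polynomial_card_latticeLexMax_sum_eq (w : ι → Fin d → ℕ) {c : ℝ} (hc : 0 < c) :
    ∃ p ∈ Polynomial.degreeLT ℚ d, ∀ n : ℕ,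
      (Nat.card {a | a ∈ latticeLexMax w ∧ ∑ i, a i = c + n} : ℚ) = p.eval (n : ℚ) :=
  exists_polynomial_card_sum_eq (fun _ ha => ha.1.1)
    (fun _ ha _ hu => add_natCast_mem_latticeLexMax_iff ha hu) finite_latticeLexMax_inter_Iic_one
    (fun _ ha => by simpa using ha.1.ncard_support_le_finrank) hc

end ConicMap

section UpperSet

variable {ι : Type*} [Finite ι] {P : Set (ι → ℝ)}

theorem mem_interior_smul_iff_exists_gt (hP : IsUpperSet P) {c : ℝ} (hc : 0 < c) {x : ι → ℝ}
    (hx : ∀ i, 0 < x i) : x ∈ interior (c • P) ↔ ∃ t > c, x ∈ t • P := by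
  constructor
  · intro hint
    have hlim : Tendsto (fun r : ℝ => r • x) (nhdsWithin 1 (Iio 1)) (nhds x) :=
      ((continuous_id.smul continuous_const).tendsto' 1 x (one_smul ℝ x)).mono_left
        nhdsWithin_le_nhds
    have hpos : ∀ᶠ r : ℝ in nhdsWithin 1 (Iio 1), 0 < r := nhdsWithin_le_nhds (lt_mem_nhds one_pos)
    obtain ⟨r, ⟨hmem, hr⟩, hr1⟩ :=
      ((hlim.eventually_mem (mem_interior_iff_mem_nhds.1 hint)).and hpos |>.and
        self_mem_nhdsWithin).exists
    refine ⟨r⁻¹ * c, lt_mul_of_one_lt_left hc ((one_lt_inv₀ hr).2 hr1), ?_⟩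
    rwa [mul_smul, mem_inv_smul_set_iff₀ hr.ne']
  · rintro ⟨t, htc, y, hy, rfl⟩
    have := Fintype.ofFinite ι
    have hcP : IsUpperSet (c • P) := hP.image (OrderIso.smulRight hc)
    refine hcP.mem_interior_of_forall_lt (subset_closure (smul_mem_smul_set hy)) fun i => ?_
    have hyi : 0 < y i := pos_of_mul_pos_right (hx i) (hc.trans htc).le
    exact mul_lt_mul_of_pos_right htc hyi

theorem mem_smul_diff_interior_iff_isGreatest (hP : IsUpperSet P) {c : ℝ} (hc : 0 < c) {x : ι → ℝ}
    (hx : ∀ i, 0 < x i) : x ∈ c • P \ interior (c • P) ↔ IsGreatest {t : ℝ | x ∈ t • P} c := by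
  rw [Set.mem_sdiff, mem_interior_smul_iff_exists_gt hP hc hx]
  refine and_congr_right' ⟨fun h t ht => not_lt.1 fun hct => h ⟨t, hct, ht⟩, ?_⟩
  rintro hub ⟨t, hct, ht⟩
  exact (hub ht).not_gt hct

end UpperSet

section NewtonPolyhedron

variable {d : ℕ} {S : Set (Fin d → ℕ)}

theorem convexHull_range_natCast : convexHull ℝ (range ((↑) : ℕ → ℝ)) = Ici 0 := by
  refine (convexHull_min ?_ (convex_Ici 0)).antisymm fun x hx => ?_
  · rintro _ ⟨n, rfl⟩
    exact mem_Ici.2 n.cast_nonneg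
  · obtain ⟨n, hn⟩ := exists_nat_ge x
    have hseg : x ∈ segment ℝ ((0 : ℕ) : ℝ) n := by
      rw [segment_eq_Icc (Nat.cast_le.2 n.zero_le), Nat.cast_zero]
      exact ⟨hx, hn⟩
    exact segment_subset_convexHull (mem_range_self 0) (mem_range_self n) hseg

theorem newtonPoly_univ (d : ℕ) : newtonPoly d univ = Ici 0 := by
  have hpi : expToReal d '' univ = univ.pi fun _ => range ((↑) : ℕ → ℝ) := by
    rw [image_univ]
    exact range_piMap fun _ => ((↑) : ℕ → ℝ)
  rw [newtonPoly, hpi, convexHull_pi, ← pi_univ_Ici]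
  simp only [convexHull_range_natCast, Pi.zero_apply]

theorem isUpperSet_newtonPoly (hS : IsUpperSet S) : IsUpperSet (newtonPoly d S) := by
  intro x y hxy hx
  have hsub : expToReal d '' S + expToReal d '' univ ⊆ expToReal d '' S := by
    rintro _ ⟨_, ⟨v, hv, rfl⟩, _, ⟨u, -, rfl⟩, rfl⟩
    exact ⟨v + u, hS le_self_add hv, funext fun i => Nat.cast_add (v i) (u i)⟩
  have hyx : y - x ∈ newtonPoly d univ := by rw [newtonPoly_univ]; exact sub_nonneg.2 hxy
  rw [← add_sub_cancel x y]
  refine convexHull_mono hsub ?_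
  rw [convexHull_add]
  exact add_mem_add hx hyx

theorem exists_nonneg_conicMap_eq {ι : Type*} [Fintype ι] {w : ι → Fin d → ℕ}
    {N : ℕ} (hN : N ≠ 0) (hw : ∀ j, ∃ i, w i = Pi.single j N) {x : Fin d → ℝ} (hx : 0 ≤ x) :
    ∃ a, 0 ≤ a ∧ conicMap w a = x := by
  classical
  choose e he using hw
  refine ⟨∑ j, Pi.single (e j) (x j / N), Finset.sum_nonneg fun j _ =>
    Pi.single_nonneg.2 (div_nonneg (hx j) (Nat.cast_nonneg N)), ?_⟩
  have hcast : ∀ j, expToReal d (Pi.single j N) = Pi.single j (N : ℝ) := fun j =>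
    funext fun k => Pi.apply_single (fun _ => ((↑) : ℕ → ℝ)) (fun _ => Nat.cast_zero) j N k
  simp only [map_sum, conicMap_single, he, hcast, ← Pi.single_smul, smul_eq_mul,
    div_mul_cancel₀ _ (Nat.cast_ne_zero.2 hN : (N : ℝ) ≠ 0)]
  exact Finset.univ_sum_single x

theorem image_conicMap_subset_newtonPoly (hS : IsUpperSet S) {ι : Type*} [Fintype ι]
    {w : ι → Fin d → ℕ} (hw : ∀ i, w i ∈ S) :
    conicMap w '' {a | 0 ≤ a ∧ 1 ≤ ∑ i, a i} ⊆ newtonPoly d S := by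
  rintro _ ⟨a, ⟨ha, hsum⟩, rfl⟩
  have hpos : 0 < ∑ i, a i := zero_lt_one.trans_le hsum
  have hmem : conicMap w ((∑ i, a i)⁻¹ • a) ∈ newtonPoly d S := by
    refine (convex_convexHull ℝ _).sum_mem (fun i _ => ?_) ?_ fun i _ =>
      subset_convexHull ℝ _ (mem_image_of_mem _ (hw i))
    · exact mul_nonneg (inv_nonneg.2 hpos.le) (ha i)
    · simp only [Pi.smul_apply, smul_eq_mul, ← Finset.mul_sum, inv_mul_cancel₀ hpos.ne']
  refine isUpperSet_newtonPoly hS (monotone_conicMap w ?_) hmem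
  exact smul_le_of_le_one_left ha (inv_le_one_of_one_le₀ hsum)

theorem newtonPoly_subset_image_conicMap {ι : Type*} [Fintype ι] {w : ι → Fin d → ℕ}
    (hw : ∀ v ∈ S, ∃ i, w i ≤ v) (hcone : ∀ x, 0 ≤ x → ∃ a, 0 ≤ a ∧ conicMap w a = x) :
    newtonPoly d S ⊆ conicMap w '' {a | 0 ≤ a ∧ 1 ≤ ∑ i, a i} := by
  classical
  have hlin : IsLinearMap ℝ fun a : ι → ℝ => ∑ i, a i :=
    ⟨fun _ _ => Finset.sum_add_distrib, fun _ _ => (Finset.mul_sum ..).symm⟩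
  have hconv : Convex ℝ {a : ι → ℝ | 0 ≤ a ∧ 1 ≤ ∑ i, a i} :=
    (convex_Ici 0).inter (convex_halfSpace_ge hlin 1)
  refine convexHull_min ?_ (hconv.linear_image (conicMap w))
  rintro _ ⟨v, hv, rfl⟩
  obtain ⟨i, hi⟩ := hw v hv
  obtain ⟨b, hb, hbv⟩ := hcone (expToReal d v - expToReal d (w i))
    (sub_nonneg.2 fun j => Nat.cast_le.2 (hi j))
  have hsingle : (0 : ι → ℝ) ≤ Pi.single i 1 := Pi.single_nonneg.2 zero_le_one
  refine ⟨Pi.single i 1 + b, ⟨add_nonneg hsingle hb, ?_⟩, ?_⟩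
  · simp only [Pi.add_apply, Finset.sum_add_distrib, Finset.sum_pi_single', Finset.mem_univ,
      if_true]
    exact le_add_of_nonneg_right (Finset.sum_nonneg fun i _ => hb i)
  · rw [map_add, conicMap_single, hbv, one_smul, add_sub_cancel]

theorem exists_forall_le_apply_imp_mem (hcof : (Sᶜ).Finite) :
    ∃ N : ℕ, N ≠ 0 ∧ ∀ v : Fin d → ℕ, ∀ i, N ≤ v i → v ∈ S := by
  obtain ⟨b, hb⟩ := hcof.bddAbove
  refine ⟨∑ i, b i + 1, Nat.succ_ne_zero _, fun v i hi => not_not.1 fun hv => ?_⟩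
  have hle : v i ≤ ∑ i, b i := (hb hv i).trans (Finset.single_le_sum (by simp) (Finset.mem_univ i))
  exact (Nat.lt_of_succ_le hi).not_ge hle

-- The generators are the exponents in a box large enough that truncation to it preserves `S`.
theorem exists_newtonPoly_eq_image_conicMap (hS : IsUpperSet S) (hcof : (Sᶜ).Finite) :
    ∃ V : Finset (Fin d → ℕ), ↑V ⊆ S ∧
      newtonPoly d S = conicMap (Subtype.val : V → Fin d → ℕ) '' {a | 0 ≤ a ∧ 1 ≤ ∑ i, a i} := by
  classical
  obtain ⟨N, hN, hbig⟩ := exists_forall_le_apply_imp_mem hcof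
  let V : Finset (Fin d → ℕ) := {v ∈ Finset.Iic fun _ => N | v ∈ S}
  have hV : ∀ v, v ∈ V ↔ (v ≤ fun _ => N) ∧ v ∈ S := fun v => by simp [V]
  refine ⟨V, fun v hv => ((hV v).1 hv).2, Subset.antisymm ?_ ?_⟩
  · refine newtonPoly_subset_image_conicMap (fun v hv => ?_) fun x hx =>
      exists_nonneg_conicMap_eq hN (fun j => ⟨⟨Pi.single j N, (hV _).2 ⟨?_, ?_⟩⟩, rfl⟩) hx
    · refine ⟨⟨v ⊓ fun _ => N, (hV _).2 ⟨inf_le_right, ?_⟩⟩, inf_le_left⟩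
      by_cases hle : v ≤ fun _ => N
      · rwa [inf_eq_left.2 hle]
      · obtain ⟨i, hi⟩ := not_forall.1 hle
        exact hbig _ i (le_inf (not_le.1 hi).le le_rfl)
    · exact update_le_iff.2 ⟨le_rfl, fun _ _ => N.zero_le⟩
    · exact hbig _ j (by simp)
  · exact image_conicMap_subset_newtonPoly hS fun v => ((hV v).1 v.2).2

end NewtonPolyhedron

section Boundary

theorem mem_smul_image_iff {ι E : Type*} [Fintype ι] [AddCommGroup E] [Module ℝ E]
    (L : (ι → ℝ) →ₗ[ℝ] E) {t : ℝ} (ht : 0 < t) {x : E} :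
    x ∈ t • L '' {a | 0 ≤ a ∧ 1 ≤ ∑ i, a i} ↔ ∃ a, 0 ≤ a ∧ t ≤ ∑ i, a i ∧ L a = x := by
  have hdilate : t • {a : ι → ℝ | 0 ≤ a ∧ 1 ≤ ∑ i, a i} = {a | 0 ≤ a ∧ t ≤ ∑ i, a i} := by
    ext a
    rw [mem_smul_set_iff_inv_smul_mem₀ ht.ne']
    refine and_congr (smul_nonneg_iff_nonneg_of_pos_left (inv_pos.2 ht)) ?_
    simp only [Pi.smul_apply, smul_eq_mul, ← Finset.mul_sum]
    rw [← div_eq_inv_mul, one_le_div ht]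
  rw [← image_smul_set, hdilate]
  simp only [mem_image, mem_ofPred_eq, and_assoc]

theorem IsLexMax.isGreatest_iff_sum_eq {ι E : Type*} [Fintype ι] [AddCommGroup E] [Module ℝ E]
    {L : (ι → ℝ) →ₗ[ℝ] E} {a : ι → ℝ} (ha : IsLexMax L a) {c : ℝ} (hc : 0 < c) :
    IsGreatest {t : ℝ | L a ∈ t • L '' {b | 0 ≤ b ∧ 1 ≤ ∑ i, b i}} c ↔ ∑ i, a i = c := by
  have hub : ∀ {t : ℝ}, 0 < t → L a ∈ t • L '' {b | 0 ≤ b ∧ 1 ≤ ∑ i, b i} → t ≤ ∑ i, a i := by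
    intro t ht hmem
    obtain ⟨b, hb, htb, hLb⟩ := (mem_smul_image_iff L ht).1 hmem
    exact htb.trans (ha.sum_le_sum hb hLb)
  refine ⟨fun h => ?_, ?_⟩
  · have hle := hub hc h.1
    have hmem := (mem_smul_image_iff L (hc.trans_le hle)).2 ⟨a, ha.1, le_rfl, rfl⟩
    exact (h.2 hmem).antisymm hle
  · rintro rfl
    refine ⟨(mem_smul_image_iff L hc).2 ⟨a, ha.1, le_rfl, rfl⟩, fun t ht => ?_⟩
    exact (le_or_gt t 0).elim (fun h => h.trans hc.le) fun h => hub h ht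

variable {d : ℕ} {S : Set (Fin d → ℕ)}

theorem expToReal_add_one_mem_boundary_iff (hS : IsUpperSet S) {c : ℝ} (hc : 0 < c)
    (v : Fin d → ℕ) :
    expToReal d v + 1 ∈ c • newtonPoly d S \ interior (c • newtonPoly d S) ↔
      IsGreatest {t : ℝ | expToReal d v + 1 ∈ t • newtonPoly d S} c :=
  mem_smul_diff_interior_iff_isGreatest (isUpperSet_newtonPoly hS) hc
    fun i => Nat.cast_add_one_pos (v i)

theorem multJump_eq_card_latticeLexMax (hS : IsUpperSet S) {ι : Type*} [Fintype ι]
    {w : ι → Fin d → ℕ} (hw : ∀ i, w i ≠ 0)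
    (hP : newtonPoly d S = conicMap w '' {a | 0 ≤ a ∧ 1 ≤ ∑ i, a i}) {c : ℝ} (hc : 0 < c) :
    multJump d S c = Nat.card {a | a ∈ latticeLexMax w ∧ ∑ i, a i = c} := by
  have himage : (fun v => expToReal d v + 1) '' {v | expToReal d v + 1 ∈
        c • newtonPoly d S \ interior (c • newtonPoly d S)} =
      conicMap w '' {a | a ∈ latticeLexMax w ∧ ∑ i, a i = c} := by
    simp only [expToReal_add_one_mem_boundary_iff hS hc]
    rw [hP]
    refine Subset.antisymm ?_ ?_
    · rintro _ ⟨v, hv, rfl⟩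
      obtain ⟨b, hb, -, hLb⟩ := (mem_smul_image_iff _ hc).1 hv.1
      obtain ⟨a, ha, hab⟩ := exists_isLexMax_of_isCompact hb (isCompact_setOf_conicMap_eq hw _)
      have hav : conicMap w a = expToReal d v + 1 := hab.trans hLb
      exact ⟨a, ⟨⟨ha, v, hav⟩, (ha.isGreatest_iff_sum_eq hc).1 (hav ▸ hv)⟩, hav⟩
    · rintro _ ⟨a, ⟨⟨ha, v, hav⟩, hac⟩, rfl⟩
      have hgreatest := (ha.isGreatest_iff_sum_eq hc).2 hac
      rw [hav] at hgreatest
      exact ⟨v, hgreatest, hav.symm⟩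
  have hinj : Function.Injective fun v => expToReal d v + 1 := fun v v' h =>
    funext fun i => Nat.cast_injective (congrFun (add_right_cancel h) i)
  have hinjOn : InjOn (conicMap w) {a | a ∈ latticeLexMax w ∧ ∑ i, a i = c} :=
    fun a ha b hb => ha.1.1.eq_of_map_eq hb.1.1
  rw [multJump, Nat.card_coe_set_eq, Nat.card_coe_set_eq, ← ncard_image_of_injective _ hinj,
    himage, hinjOn.ncard_image]

theorem multJump_eq_zero_of_zero_mem (hS : IsUpperSet S) (h0 : 0 ∈ S) {c : ℝ} (hc : 0 < c) :
    multJump d S c = 0 := by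
  have hzero : 0 ∈ newtonPoly d S := subset_convexHull ℝ _ ⟨0, h0, funext fun _ => Nat.cast_zero⟩
  have hmem : ∀ v : Fin d → ℕ, expToReal d v + 1 ∈ (c + 1) • newtonPoly d S := fun v => by
    have hc1 : 0 < c + 1 := add_pos hc one_pos
    rw [mem_smul_set_iff_inv_smul_mem₀ hc1.ne']
    refine isUpperSet_newtonPoly hS (smul_nonneg (inv_nonneg.2 hc1.le) fun i => ?_) hzero
    exact (Nat.cast_add_one_pos (v i)).le
  simp only [multJump, expToReal_add_one_mem_boundary_iff hS hc]
  refine Nat.card_eq_zero.2 (Or.inl ⟨fun ⟨v, hv⟩ => ?_⟩)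
  exact (hv.2 (hmem v)).not_gt (lt_add_one c)

end Boundary

theorem multiplicity_is_polynomial_general (d : ℕ) {S : Set (Fin d → ℕ)} (hS : IsUpperSet S)
    (hcof : (Sᶜ).Finite) {c : ℝ} (hc : 0 < c) :
    ∃ p ∈ Polynomial.degreeLT ℚ d, ∀ n : ℕ, (multJump d S (c + n) : ℚ) = p.eval (n : ℚ) := by
  have hcn : ∀ n : ℕ, 0 < c + n := fun n => add_pos_of_pos_of_nonneg hc n.cast_nonneg
  by_cases h0 : 0 ∈ S
  · exact ⟨0, zero_mem _, fun n => by simp [multJump_eq_zero_of_zero_mem hS h0 (hcn n)]⟩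
  · obtain ⟨V, hVS, hP⟩ := exists_newtonPoly_eq_image_conicMap hS hcof
    have hV : ∀ v : V, v.1 ≠ 0 := fun v hv => h0 (hv ▸ hVS v.2)
    simp only [multJump_eq_card_latticeLexMax hS hV hP (hcn _)]
    exact exists_polynomial_card_latticeLexMax_sum_eq _ hc

/-- Monomial case of Theorem 3.1: for a cofinite monomial ideal `𝔞` in `k[x₁,…,x_d]`
and rational `c > 0`, the multiplicity function `n ↦ m(c+n)` agrees with a polynomial
of degree at most `d - 1`. -/
theorem multiplicity_is_polynomial (d : ℕ) (hd : 1 ≤ d) (k : Type*) [Field k]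
    (S : Set (Fin d → ℕ)) (hS : ∀ v ∈ S, ∀ w : Fin d → ℕ, v + w ∈ S)
    (hcof : (Sᶜ : Set (Fin d → ℕ)).Finite)
    (c : ℚ) (hc : 0 < c) :
    ∃ p : Polynomial ℚ, p.natDegree ≤ d - 1 ∧
      ∀ n : ℕ, (multJump d S ((c : ℝ) + n) : ℚ) = p.eval (n : ℚ) := by
  have hupper : IsUpperSet S := fun v u hvu hv => add_tsub_cancel_of_le hvu ▸ hS v hv (u - v)
  obtain ⟨p, hp, hpn⟩ :=
    multiplicity_is_polynomial_general d hupper hcof (c := (c : ℝ)) (Rat.cast_pos.2 hc)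
  rw [← Nat.sub_add_cancel hd, Polynomial.degreeLT_succ_eq_degreeLE] at hp
  exact ⟨p, Polynomial.natDegree_le_of_degree_le (Polynomial.mem_degreeLE.1 hp), hpn⟩
end

section
/- Let 𝔞 be a cofinite monomial ideal in k[x₁,…,x_d] and let c > 0 be a rational number with m(c) > 0 (i.e., c is a jumping number of 𝔞). Then the sequence m(c+n)/n^{d−1} converges as n → ∞ to a strictly positive real number ρ_c. (Corollary 5.4: the Rees coefficient of every jumping number of a cofinite monomial ideal is positive.) -/
open Set Filter Pointwise MeasureTheory

/-!
The boundary of the Newton polyhedron inside the open orthant is covered by its finitely many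
compact facets. Each compact facet is a lattice polytope on a hyperplane `l ⬝ᵥ x = 1`, and comparing
lattice points with volume in that hyperplane shows that its `n`-th dilate contains about
`ρ * n ^ (d - 1)` lattice points, with `ρ > 0`. If the dilate by `c + n₀` contains a lattice point,
then `c` is the value of `l` at a lattice point, and translating by lattice vectors bounds the count
in the dilate by `c + n` between the counts in the dilates by `n - K` and `n + K`. For the lower
bound the translation vector is taken in the open cone over the facet: these cones are pairwise
disjoint and contained in the open orthant, so the counts over different facets add up.
-/

lemma mem_convexHull_setOf_eq_of_forall_le {E : Type*} [AddCommGroup E] [Module ℝ E] {A : Set E}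
    {φ : E →ₗ[ℝ] ℝ} {r : ℝ} (hA : ∀ a ∈ A, r ≤ φ a) {x : E} (hx : x ∈ convexHull ℝ A)
    (hxr : φ x = r) : x ∈ convexHull ℝ {a ∈ A | φ a = r} := by
  classical
  obtain ⟨ι, _, w, z, hw, hw1, hz, rfl⟩ := mem_convexHull_iff_exists_fintype.1 hx
  have hexcess : ∑ i, w i * (φ (z i) - r) = 0 := by
    simp only [map_sum, map_smul, smul_eq_mul] at hxr
    simp only [mul_sub, Finset.sum_sub_distrib, ← Finset.sum_mul, hw1, hxr, one_mul, sub_self]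
  have htight : ∀ i, w i ≠ 0 → φ (z i) = r := fun i hi => by
    have := (Finset.sum_eq_zero_iff_of_nonneg fun j _ =>
      mul_nonneg (hw j) (sub_nonneg.2 (hA _ (hz j)))).1 hexcess i (Finset.mem_univ i)
    exact sub_eq_zero.1 ((mul_eq_zero.1 this).resolve_left hi)
  rw [← Finset.sum_filter_of_ne (p := fun i => w i ≠ 0) fun i _ h => left_ne_zero_of_smul h]
  refine (convex_convexHull ℝ _).sum_mem (fun i _ => hw i) ?_ fun i hi => ?_
  · rwa [Finset.sum_filter_ne_zero]
  · exact subset_convexHull ℝ _ ⟨hz i, htight i (Finset.mem_filter.1 hi).2⟩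

lemma interior_nonempty_of_convex_of_span_eq_top {E : Type*} [NormedAddCommGroup E]
    [NormedSpace ℝ E] [FiniteDimensional ℝ E] {s : Set E} (hs : Convex ℝ s) (h0 : 0 ∈ s)
    (hspan : Submodule.span ℝ s = ⊤) : (interior s).Nonempty := by
  rw [hs.interior_nonempty_iff_affineSpan_eq_top,
    ← AffineSubspace.direction_eq_top_iff_of_nonempty ((affineSpan_nonempty ℝ).2 ⟨0, h0⟩),
    direction_affineSpan, vectorSpan_eq_span_vsub_set_right ℝ h0]
  simpa only [vsub_eq_sub, sub_zero, image_id'] using hspan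

lemma vectorSpan_eq_ker_of_span_eq_top {K V : Type*} [Field K] [AddCommGroup V] [Module K V]
    {T : Set V} (hT : Submodule.span K T = ⊤) (hne : T.Nonempty) {φ : V →ₗ[K] K}
    (hφ : ∀ x ∈ T, φ x = 1) : vectorSpan K T = LinearMap.ker φ := by
  obtain ⟨w, hw⟩ := hne
  apply le_antisymm
  · rw [vectorSpan_eq_span_vsub_set_right K hw, Submodule.span_le]
    rintro _ ⟨x, hx, rfl⟩
    simp [hφ x hx, hφ w hw]
  · -- The projection onto `ker φ` along `w` maps `T`, hence the whole space, into `vectorSpan K T`.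
    have hproj : (⊤ : Submodule K V) ≤
        (vectorSpan K T).comap (LinearMap.id - φ.smulRight w) := by
      rw [← hT, Submodule.span_le]
      intro x hx
      simpa [hφ x hx] using vsub_mem_vectorSpan K hx hw
    intro x hx
    simpa [LinearMap.mem_ker.1 hx] using hproj (Submodule.mem_top (x := x))

lemma span_preimage_add_eq_top {K V : Type*} [Field K] [AddCommGroup V]
    [Module K V] {T : Set V} (hT : Submodule.span K T = ⊤) {w : V} (hw : w ∈ T)
    {φ : V →ₗ[K] K} (hφ : ∀ x ∈ T, φ x = 1) :
    Submodule.span K ((fun x : LinearMap.ker φ => (x : V) + w) ⁻¹' T) = ⊤ := by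
  have hpre : (fun x : LinearMap.ker φ => (x : V) + w) ⁻¹' T =
      (LinearMap.ker φ).subtype ⁻¹' ((fun x => x -ᵥ w) '' T) := by
    ext x
    simp [sub_eq_iff_eq_add]
  have hker := vectorSpan_eq_ker_of_span_eq_top hT ⟨w, hw⟩ hφ
  rw [vectorSpan_eq_span_vsub_set_right K hw] at hker
  rw [hpre, Submodule.span_preimage_eq ((nonempty_of_mem hw).image _), hker,
    Submodule.comap_subtype_self]
  rw [Submodule.range_subtype, ← hker]
  exact Submodule.subset_span

section LatticeCount

variable {E : Type*} [NormedAddCommGroup E] [NormedSpace ℝ E]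

lemma smul_inter_lattice_eq_image (L : Submodule ℤ E) {C : Set E} {φ : E →ₗ[ℝ] ℝ}
    (hC : ∀ x ∈ C, φ x = 1) {w : E} (hwL : w ∈ L) (hw : φ w = 1) {n : ℕ} (hn : n ≠ 0) :
    (n : ℝ) • C ∩ L = (fun x : LinearMap.ker φ => (n : ℝ) • ((x : E) + w)) ''
      ((fun x : LinearMap.ker φ => (x : E) + w) ⁻¹' C ∩
        (n : ℝ)⁻¹ • (ZLattice.comap ℝ L (LinearMap.ker φ).subtype : Set _)) := by
  have hn' : (n : ℝ) ≠ 0 := Nat.cast_ne_zero.2 hn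
  have hnw : (n : ℝ) • w ∈ L := Nat.cast_smul_eq_nsmul ℝ n w ▸ L.nsmul_mem hwL n
  ext y
  constructor
  · rintro ⟨⟨z, hz, rfl⟩, hzL⟩
    refine ⟨⟨z - w, by simp [hC z hz, hw]⟩, ⟨by simpa using hz, ?_⟩, by simp⟩
    rw [mem_inv_smul_set_iff₀ hn']
    have : (n : ℝ) • z - (n : ℝ) • w ∈ L := L.sub_mem hzL hnw
    rwa [← smul_sub] at this
  · rintro ⟨x, ⟨hxC, hxL⟩, rfl⟩
    rw [mem_inv_smul_set_iff₀ hn'] at hxL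
    have : (n : ℝ) • (x : E) + (n : ℝ) • w ∈ L := L.add_mem hxL hnw
    exact ⟨smul_mem_smul_set hxC, by rwa [← smul_add] at this⟩

variable [FiniteDimensional ℝ E]

lemma exists_tendsto_ncard_inter_lattice_div_pow (L : Submodule ℤ E) [DiscreteTopology L]
    [IsZLattice ℝ L] {s : Set E} (hconv : Convex ℝ s) (hcomp : IsCompact s)
    (hint : (interior s).Nonempty) :
    ∃ ρ : ℝ, 0 < ρ ∧ Tendsto (fun n : ℕ => ((s ∩ (n : ℝ)⁻¹ • (L : Set E)).ncard : ℝ) /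
      (n : ℝ) ^ Module.finrank ℝ E) atTop (nhds ρ) := by
  borelize E
  let b := Module.Free.chooseBasis ℤ L
  let e : E ≃L[ℝ] _ := (b.ofZLatticeBasis ℝ L).equivFunL
  have hlim := ZLattice.covolume.tendsto_card_div_pow'' b hcomp.isBounded hcomp.measurableSet
    ((hconv.linear_image e.toLinearEquiv.toLinearMap).addHaar_frontier volume)
  rw [← Module.finrank_eq_card_chooseBasisIndex, ZLattice.rank ℝ L] at hlim
  refine ⟨_, ENNReal.toReal_pos ?_ (hcomp.image e.continuous).measure_lt_top.ne, hlim⟩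
  refine (Measure.measure_pos_of_nonempty_interior _ ?_).ne'
  exact e.toHomeomorph.image_interior s ▸ hint.image _

/-- The volume argument takes place in the hyperplane `φ = 0`, to which the polytope is
translated by one of its points `w ∈ T`; as `w` is a lattice point, lattice points are kept. -/
theorem exists_tendsto_ncard_smul_convexHull_inter_lattice_div_pow (L : Submodule ℤ E)
    [DiscreteTopology L] {T : Set E} (hfin : T.Finite) (hne : T.Nonempty) (hTL : T ⊆ L)
    (hspan : Submodule.span ℝ T = ⊤) {φ : E →ₗ[ℝ] ℝ} (hφ : ∀ x ∈ T, φ x = 1) :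
    ∃ ρ : ℝ, 0 < ρ ∧ Tendsto (fun n : ℕ => (((n : ℝ) • convexHull ℝ T ∩ L).ncard : ℝ) /
      (n : ℝ) ^ (Module.finrank ℝ E - 1)) atTop (nhds ρ) := by
  obtain ⟨w, hw⟩ := hne
  set H := LinearMap.ker φ
  let L₀ : Submodule ℤ H := ZLattice.comap ℝ L H.subtype
  set T₀ : Set H := (fun x : H => (x : E) + w) ⁻¹' T with hT₀
  set s : Set H := (fun x : H => (x : E) + w) ⁻¹' convexHull ℝ T
  have hT₀s : T₀ ⊆ s := preimage_mono (subset_convexHull ℝ T)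
  have hT₀span : Submodule.span ℝ T₀ = ⊤ := span_preimage_add_eq_top hspan hw hφ
  have hT₀L : T₀ ⊆ L₀ := fun x hx => by
    have : (x : E) + w - w ∈ L := L.sub_mem (hTL hx) (hTL hw)
    rwa [add_sub_cancel_right] at this
  have hdisc : DiscreteTopology L₀ :=
    ZLattice.comap_discreteTopology ℝ L continuous_subtype_val H.injective_subtype
  have hlat : IsZLattice ℝ L₀ := ⟨top_le_iff.1 (hT₀span ▸ Submodule.span_mono hT₀L)⟩
  have hsconv : Convex ℝ s :=
    ((convex_convexHull ℝ T).translate_preimage_left w).linear_preimage H.subtype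
  have hscomp : IsCompact s :=
    ((Homeomorph.addRight w).isClosedEmbedding.comp
      (Submodule.closed_of_finiteDimensional H).isClosedEmbedding_subtypeVal).isCompact_preimage
        (hfin.isCompact_convexHull ℝ)
  have hsint : (interior s).Nonempty :=
    interior_nonempty_of_convex_of_span_eq_top hsconv (hT₀s (by simpa [hT₀] using hw))
      (top_le_iff.1 (hT₀span ▸ Submodule.span_mono hT₀s))
  obtain ⟨ρ, hρ, hlim⟩ := exists_tendsto_ncard_inter_lattice_div_pow L₀ hsconv hscomp hsint
  have hφ0 : φ ≠ 0 := fun h => by simpa [h] using hφ w hw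
  have hrank : Module.finrank ℝ E - 1 = Module.finrank ℝ H :=
    Nat.sub_eq_of_eq_add (Module.Dual.finrank_ker_add_one_of_ne_zero hφ0).symm
  have hφhull : ∀ x ∈ convexHull ℝ T, φ x = 1 :=
    convexHull_min hφ (convex_hyperplane φ.isLinear 1)
  refine ⟨ρ, hρ, hlim.congr' ?_⟩
  filter_upwards [eventually_ne_atTop 0] with n hn
  rw [hrank, smul_inter_lattice_eq_image L hφhull (hTL hw) (hφ w hw) hn,
    ncard_image_of_injective]
  exact (smul_right_injective E (Nat.cast_ne_zero.2 hn)).comp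
    ((add_left_injective w).comp Subtype.val_injective)

end LatticeCount

section NewtonPolyhedron

variable {d : ℕ}

/-- The polyhedron of linear functionals that are at least `1` on the Newton polyhedron of `S`;
a functional is encoded by its coefficient vector. -/
def dualPolyhedron (S : Set (Fin d → ℕ)) : Set (Fin d → ℝ) :=
  {l | ∀ v ∈ S, 1 ≤ l ⬝ᵥ expToReal d v}

/-- The exponents of `S` on which the functional `l` takes the value `1`. -/
def tightExponents (S : Set (Fin d → ℕ)) (l : Fin d → ℝ) : Set (Fin d → ℝ) :=
  {x ∈ expToReal d '' S | l ⬝ᵥ x = 1}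

/-- The face of the Newton polyhedron of `S` cut out by `l ⬝ᵥ x = 1`, for `l` in the dual
polyhedron. It is compact when `S` is cofinite. -/
def compactFace (S : Set (Fin d → ℕ)) (l : Fin d → ℝ) : Set (Fin d → ℝ) :=
  convexHull ℝ (tightExponents S l)

/-- The functionals that cut out the compact facets of the Newton polyhedron of `S`: those in
the dual polyhedron whose face spans the ambient space linearly. -/
def facetFunctionals (S : Set (Fin d → ℕ)) : Set (Fin d → ℝ) :=
  {l ∈ dualPolyhedron S | Submodule.span ℝ (tightExponents S l) = ⊤}

lemma expToReal_add (v w : Fin d → ℕ) : expToReal d (v + w) = expToReal d v + expToReal d w := by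
  ext i
  simp [expToReal]

lemma expToReal_single (j : Fin d) (n : ℕ) :
    expToReal d (Pi.single j n) = Pi.single j (n : ℝ) := by
  ext i
  obtain rfl | h := eq_or_ne i j
  · simp [expToReal]
  · simp [expToReal, h]

lemma expToReal_nonneg (v : Fin d → ℕ) : 0 ≤ expToReal d v := fun i => Nat.cast_nonneg (v i)

lemma exists_pi_single_mem_of_finite_compl {S : Set (Fin d → ℕ)} (hcof : Sᶜ.Finite) :
    ∃ N : ℕ, ∀ j, Pi.single j N ∈ S := by
  have hj : ∀ j : Fin d, ∀ᶠ N : ℕ in cofinite, Pi.single j N ∈ S := fun j =>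
    (Pi.single_injective j).tendsto_cofinite.eventually hcof.eventually_cofinite_notMem |>.mono
      fun _ => not_not.1
  exact (eventually_all.2 hj).exists

lemma dotProduct_eq_of_mem_convexHull {T : Set (Fin d → ℝ)} {l x : Fin d → ℝ} {r : ℝ}
    (hT : ∀ y ∈ T, l ⬝ᵥ y = r) (hx : x ∈ convexHull ℝ T) : l ⬝ᵥ x = r :=
  convexHull_min (t := {y | l ⬝ᵥ y = r}) hT
    (convex_hyperplane (dotProductBilin ℝ ℝ l).isLinear r) hx

lemma eq_of_dotProduct_eqOn_of_span_eq_top {l l' : Fin d → ℝ} {T : Set (Fin d → ℝ)}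
    (hT : Submodule.span ℝ T = ⊤) (h : ∀ x ∈ T, l ⬝ᵥ x = l' ⬝ᵥ x) : l = l' :=
  (dotProductEquiv ℝ (Fin d)).injective (LinearMap.ext_on hT h)

variable {S : Set (Fin d → ℕ)} {l x : Fin d → ℝ}

lemma nonneg_of_mem_newtonPoly (hx : x ∈ newtonPoly d S) : 0 ≤ x :=
  convexHull_min (forall_mem_image.2 fun v _ => expToReal_nonneg v) (convex_Ici 0) hx

lemma one_le_dotProduct_of_mem_newtonPoly (hl : l ∈ dualPolyhedron S)
    (hx : x ∈ newtonPoly d S) : 1 ≤ l ⬝ᵥ x :=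
  convexHull_min (t := {y | 1 ≤ l ⬝ᵥ y}) (image_subset_iff.2 hl)
    (convex_halfSpace_ge (dotProductBilin ℝ ℝ l).isLinear 1) hx

lemma compactFace_subset_newtonPoly (S : Set (Fin d → ℕ)) (l : Fin d → ℝ) :
    compactFace S l ⊆ newtonPoly d S :=
  convexHull_mono (sep_subset _ _)

lemma dotProduct_eq_one_of_mem_compactFace (hx : x ∈ compactFace S l) : l ⬝ᵥ x = 1 :=
  dotProduct_eq_of_mem_convexHull (fun _ hy => hy.2) hx

lemma mem_compactFace_of_dotProduct_eq_one (hl : l ∈ dualPolyhedron S)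
    (hx : x ∈ newtonPoly d S) (hlx : l ⬝ᵥ x = 1) : x ∈ compactFace S l :=
  mem_convexHull_setOf_eq_of_forall_le (φ := dotProductBilin ℝ ℝ l)
    (forall_mem_image.2 hl) hx hlx

lemma one_lt_dotProduct_of_mem_interior_newtonPoly (hl : l ∈ dualPolyhedron S) (hl0 : l ≠ 0)
    (hx : x ∈ interior (newtonPoly d S)) : 1 < l ⬝ᵥ x := by
  have hsurj : Function.Surjective (dotProductEquiv ℝ (Fin d) l) :=
    LinearMap.surjective ((dotProductEquiv ℝ (Fin d)).map_ne_zero_iff.2 hl0)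
  have himage : dotProductEquiv ℝ (Fin d) l '' newtonPoly d S ⊆ Ici 1 :=
    image_subset_iff.2 fun y hy => one_le_dotProduct_of_mem_newtonPoly hl hy
  have hmem := interior_mono himage ((LinearMap.isOpenMap_of_finiteDimensional _
    hsurj).image_interior_subset _ (mem_image_of_mem _ hx))
  rwa [interior_Ici] at hmem

section Cofinite

variable {N : ℕ}

lemma one_le_mul_of_mem_dualPolyhedron (hN : ∀ j, Pi.single j N ∈ S)
    (hl : l ∈ dualPolyhedron S) (j : Fin d) : 1 ≤ l j * N := by
  simpa only [expToReal_single, dotProduct_single] using hl _ (hN j)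

lemma pos_of_mem_dualPolyhedron (hN : ∀ j, Pi.single j N ∈ S)
    (hl : l ∈ dualPolyhedron S) (j : Fin d) : 0 < l j :=
  pos_of_mul_pos_left (zero_lt_one.trans_le (one_le_mul_of_mem_dualPolyhedron hN hl j))
    N.cast_nonneg

lemma mul_le_dotProduct_of_nonneg (hl : 0 ≤ l) (hx : 0 ≤ x) (j : Fin d) :
    l j * x j ≤ l ⬝ᵥ x :=
  Finset.single_le_sum (f := fun i => l i * x i) (fun i _ => mul_nonneg (hl i) (hx i))
    (Finset.mem_univ j)

lemma le_mul_dotProduct_of_mem_dualPolyhedron (hN : ∀ j, Pi.single j N ∈ S)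
    (hl : l ∈ dualPolyhedron S) (hx : 0 ≤ x) (j : Fin d) : x j ≤ N * (l ⬝ᵥ x) :=
  calc x j ≤ (l j * N) * x j :=
        le_mul_of_one_le_left (hx j) (one_le_mul_of_mem_dualPolyhedron hN hl j)
    _ = N * (l j * x j) := by ring
    _ ≤ N * (l ⬝ᵥ x) := by
        gcongr
        exact mul_le_dotProduct_of_nonneg (fun i => (pos_of_mem_dualPolyhedron hN hl i).le) hx j

lemma finite_setOf_dotProduct_expToReal_le (hN : ∀ j, Pi.single j N ∈ S)
    (hl : l ∈ dualPolyhedron S) (r : ℝ) : {v : Fin d → ℕ | l ⬝ᵥ expToReal d v ≤ r}.Finite := by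
  refine (finite_Iic fun _ => ⌊(N : ℝ) * r⌋₊).subset fun v hv j => Nat.le_floor ?_
  have hv : l ⬝ᵥ expToReal d v ≤ r := hv
  exact (le_mul_dotProduct_of_mem_dualPolyhedron hN hl (expToReal_nonneg v) j).trans (by gcongr)

lemma finite_tightExponents (hN : ∀ j, Pi.single j N ∈ S) (hl : l ∈ dualPolyhedron S) :
    (tightExponents S l).Finite := by
  refine ((finite_setOf_dotProduct_expToReal_le hN hl 1).image (expToReal d)).subset ?_
  rintro _ ⟨⟨v, -, rfl⟩, hv⟩
  exact mem_image_of_mem _ hv.le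

lemma finite_facetFunctionals (hN : ∀ j, Pi.single j N ∈ S) : (facetFunctionals S).Finite := by
  have hfin : (𝒫 (expToReal d '' Iic fun _ => N)).Finite :=
    ((finite_Iic _).image _).finite_subsets
  refine Finite.of_finite_image (f := tightExponents S) (hfin.subset ?_) ?_
  · rintro _ ⟨l, hl, rfl⟩ _ ⟨⟨v, -, rfl⟩, hv⟩
    refine mem_image_of_mem _ fun j => ?_
    have := le_mul_dotProduct_of_mem_dualPolyhedron hN hl.1 (expToReal_nonneg v) j
    rw [hv, mul_one] at this
    exact Nat.cast_le.1 this
  · intro l hl l' _ hll'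
    refine eq_of_dotProduct_eqOn_of_span_eq_top hl.2 fun x hx => ?_
    rw [hx.2, (hll' ▸ hx : x ∈ tightExponents S l').2]

end Cofinite

/-! ### Boundary points lie on compact facets -/

lemma nonneg_of_forall_le_dotProduct_newtonPoly (hS : ∀ v ∈ S, ∀ w : Fin d → ℕ, v + w ∈ S)
    (hne : S.Nonempty) {r : ℝ} (hl : ∀ y ∈ newtonPoly d S, r ≤ l ⬝ᵥ y) : 0 ≤ l := by
  intro i
  by_contra! hneg
  obtain ⟨v, hv⟩ := hne
  obtain ⟨n, hn⟩ := exists_nat_gt ((r - l ⬝ᵥ expToReal d v) / l i)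
  have hle := hl _ (subset_convexHull ℝ _ ⟨v + Pi.single i n, hS v hv _, rfl⟩)
  rw [expToReal_add, expToReal_single, dotProduct_add, dotProduct_single] at hle
  rw [div_lt_iff_of_neg hneg] at hn
  linarith

lemma interior_newtonPoly_nonempty (hS : ∀ v ∈ S, ∀ w : Fin d → ℕ, v + w ∈ S)
    (hne : S.Nonempty) : (interior (newtonPoly d S)).Nonempty := by
  obtain ⟨v, hv⟩ := hne
  have hv' : expToReal d v ∈ expToReal d '' S := mem_image_of_mem _ hv
  rw [newtonPoly, interior_convexHull_nonempty_iff_affineSpan_eq_top,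
    ← AffineSubspace.direction_eq_top_iff_of_nonempty ((affineSpan_nonempty ℝ).2 ⟨_, hv'⟩),
    direction_affineSpan, eq_top_iff, ← (Pi.basisFun ℝ (Fin d)).span_eq, Submodule.span_le]
  rintro _ ⟨j, rfl⟩
  have hj : Pi.basisFun ℝ (Fin d) j = expToReal d (v + Pi.single j 1) -ᵥ expToReal d v := by
    simp [expToReal_add, expToReal_single]
  exact hj ▸ vsub_mem_vectorSpan ℝ (mem_image_of_mem _ (hS v hv _)) hv'

lemma exists_mem_dualPolyhedron_dotProduct_eq_one
    (hS : ∀ v ∈ S, ∀ w : Fin d → ℕ, v + w ∈ S) (hne : S.Nonempty) (hx : ∀ i, 0 < x i)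
    (hxint : x ∉ interior (newtonPoly d S)) : ∃ l ∈ dualPolyhedron S, l ⬝ᵥ x = 1 := by
  obtain ⟨f, hf0, hf⟩ := geometric_hahn_banach_of_nonempty_interior_point
    (convex_convexHull ℝ _) hxint (interior_newtonPoly_nonempty hS hne)
  obtain ⟨g, hg⟩ := (dotProductEquiv ℝ (Fin d)).surjective (-(f : (Fin d → ℝ) →ₗ[ℝ] ℝ))
  have hgf : ∀ y, g ⬝ᵥ y = -f y := LinearMap.congr_fun hg
  have hmin : ∀ y ∈ newtonPoly d S, g ⬝ᵥ x ≤ g ⬝ᵥ y := fun y hy => by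
    simpa only [hgf, neg_le_neg_iff] using hf y hy
  have hg0 : 0 ≤ g := nonneg_of_forall_le_dotProduct_newtonPoly hS hne hmin
  obtain ⟨i, hi⟩ : ∃ i, g i ≠ 0 := Function.ne_iff.1 fun h : g = 0 =>
    hf0 <| ContinuousLinearMap.ext fun y => by simpa [h] using (hgf y).symm
  have hgx : 0 < g ⬝ᵥ x := (mul_pos ((hg0 i).lt_of_ne' hi) (hx i)).trans_le
    (mul_le_dotProduct_of_nonneg hg0 (fun j => (hx j).le) i)
  refine ⟨(g ⬝ᵥ x)⁻¹ • g, fun v hv => ?_, ?_⟩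
  · rw [smul_dotProduct, smul_eq_mul, ← div_eq_inv_mul, one_le_div hgx]
    exact hmin _ (subset_convexHull ℝ _ (mem_image_of_mem _ hv))
  · rw [smul_dotProduct, smul_eq_mul, inv_mul_cancel₀ hgx.ne']

lemma eventually_add_smul_mem_dualPolyhedron {N : ℕ} (hN : ∀ j, Pi.single j N ∈ S)
    (hl : l ∈ dualPolyhedron S) {h : Fin d → ℝ} (hh : ∀ x ∈ tightExponents S l, h ⬝ᵥ x = 0) :
    ∀ᶠ t : ℝ in nhds 0, l + t • h ∈ dualPolyhedron S := by
  have hhalf : ∀ᶠ t : ℝ in nhds 0, ∀ j, l j / 2 ≤ (l + t • h) j := eventually_all.2 fun j =>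
    ((by fun_prop : Continuous fun t : ℝ => (l + t • h) j).tendsto' 0 (l j)
      (by simp)).eventually_const_le (half_lt_self (pos_of_mem_dualPolyhedron hN hl j))
  have hfew : ∀ᶠ t : ℝ in nhds 0, ∀ v ∈ {v : Fin d → ℕ | l ⬝ᵥ expToReal d v ≤ 2},
      v ∈ S → 1 ≤ (l + t • h) ⬝ᵥ expToReal d v := by
    refine (eventually_all_finite (finite_setOf_dotProduct_expToReal_le hN hl 2)).2 fun v _ => ?_
    by_cases hvS : v ∈ S
    · rcases (hl v hvS).lt_or_eq with hlt | heq
      · have hcont : Continuous fun t : ℝ => (l + t • h) ⬝ᵥ expToReal d v := by fun_prop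
        filter_upwards [(hcont.tendsto' 0 _ (by simp)).eventually_const_le hlt] with t ht _ using ht
      · have htight := hh _ ⟨mem_image_of_mem _ hvS, heq.symm⟩
        exact .of_forall fun t _ => by simp [add_dotProduct, smul_dotProduct, htight, ← heq]
    · exact .of_forall fun t hv => absurd hv hvS
  filter_upwards [hhalf, hfew] with t hthalf htfew v hv
  rcases le_or_gt (l ⬝ᵥ expToReal d v) 2 with hle | hgt
  · exact htfew v hle hv
  · calc (1 : ℝ) ≤ (l ⬝ᵥ expToReal d v) / 2 := by linarith
      _ = ((2 : ℝ)⁻¹ • l) ⬝ᵥ expToReal d v := by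
          rw [smul_dotProduct, smul_eq_mul, div_eq_inv_mul]
      _ ≤ (l + t • h) ⬝ᵥ expToReal d v :=
          dotProduct_le_dotProduct_of_nonneg_right
            (fun j => by simpa [div_eq_inv_mul] using hthalf j) (expToReal_nonneg v)

lemma isCompact_setOf_mem_dualPolyhedron_dotProduct_eq {N : ℕ} (hN : ∀ j, Pi.single j N ∈ S)
    (hx : ∀ i, 0 < x i) (r : ℝ) : IsCompact {l ∈ dualPolyhedron S | l ⬝ᵥ x = r} := by
  have hclosed : IsClosed {l ∈ dualPolyhedron S | l ⬝ᵥ x = r} := by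
    simp only [dualPolyhedron, ofPred_and, ofPred_forall]
    exact (isClosed_biInter fun v _ => isClosed_le (by fun_prop) (by fun_prop)).inter
      (isClosed_eq (by fun_prop) (by fun_prop))
  refine (isCompact_Icc (a := 0) (b := fun i => r / x i)).of_isClosed_subset hclosed fun l hl => ?_
  have hl0 : 0 ≤ l := fun i => (pos_of_mem_dualPolyhedron hN hl.1 i).le
  refine ⟨hl0, fun i => (le_div_iff₀ (hx i)).2 ?_⟩
  exact hl.2 ▸ mul_le_dotProduct_of_nonneg hl0 (fun j => (hx j).le) i

lemma mem_facetFunctionals_of_mem_extremePoints {N : ℕ} (hN : ∀ j, Pi.single j N ∈ S)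
    (hx : x ∈ newtonPoly d S)
    (hl : l ∈ extremePoints ℝ {l ∈ dualPolyhedron S | l ⬝ᵥ x = 1}) : l ∈ facetFunctionals S := by
  obtain ⟨⟨hldual, hlx⟩, hext⟩ := hl
  refine ⟨hldual, ?_⟩
  by_contra hspan
  obtain ⟨f, hf0, hf⟩ := Submodule.exists_le_ker_of_lt_top _ (lt_top_iff_ne_top.2 hspan)
  obtain ⟨h, rfl⟩ := (dotProductEquiv ℝ (Fin d)).surjective f
  have hh : ∀ y ∈ tightExponents S l, h ⬝ᵥ y = 0 := fun y hy => hf (Submodule.subset_span hy)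
  have hhx : h ⬝ᵥ x = 0 :=
    dotProduct_eq_of_mem_convexHull hh (mem_compactFace_of_dotProduct_eq_one hldual hx hlx)
  have hpos := eventually_add_smul_mem_dualPolyhedron hN hldual hh
  have hneg := eventually_add_smul_mem_dualPolyhedron hN hldual (h := -h)
    fun y hy => by rw [neg_dotProduct, hh y hy, neg_zero]
  obtain ⟨t, ⟨htpos, htneg⟩, ht0⟩ :=
    (((hpos.and hneg).filter_mono nhdsWithin_le_nhds).and self_mem_nhdsWithin
      : ∀ᶠ t in nhdsWithin (0 : ℝ) {0}ᶜ, _).exists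
  have hmid : l ∈ openSegment ℝ (l + t • h) (l + t • -h) :=
    ⟨2⁻¹, 2⁻¹, by norm_num, by norm_num, by norm_num, by module⟩
  have heq : l + t • h = l := hext ⟨htpos, by simp [add_dotProduct, hlx, hhx]⟩
    ⟨htneg, by simp [add_dotProduct, hlx, hhx]⟩ hmid
  have hth : t • h = 0 := by simpa using heq
  exact hf0 (by rw [(smul_eq_zero.1 hth).resolve_left ht0, map_zero])

lemma mem_newtonPoly_diff_interior_iff [NeZero d] (hS : ∀ v ∈ S, ∀ w : Fin d → ℕ, v + w ∈ S)
    {N : ℕ} (hN : ∀ j, Pi.single j N ∈ S) (hx : ∀ i, 0 < x i) :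
    x ∈ newtonPoly d S \ interior (newtonPoly d S) ↔
      ∃ l ∈ facetFunctionals S, x ∈ compactFace S l := by
  constructor
  · rintro ⟨hxP, hxint⟩
    obtain ⟨l, hl⟩ := (isCompact_setOf_mem_dualPolyhedron_dotProduct_eq hN hx
      1).extremePoints_nonempty
        (exists_mem_dualPolyhedron_dotProduct_eq_one hS ⟨_, hN 0⟩ hx hxint)
    exact ⟨l, mem_facetFunctionals_of_mem_extremePoints hN hxP hl,
      mem_compactFace_of_dotProduct_eq_one hl.1.1 hxP hl.1.2⟩
  · rintro ⟨l, hl, hxl⟩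
    have hlx := dotProduct_eq_one_of_mem_compactFace hxl
    have hl0 : l ≠ 0 := fun h => by simp [h] at hlx
    exact ⟨compactFace_subset_newtonPoly S l hxl, fun hint =>
      (one_lt_dotProduct_of_mem_interior_newtonPoly hl.1 hl0 hint).ne' hlx⟩

lemma mem_smul_newtonPoly_diff_interior_iff [NeZero d]
    (hS : ∀ v ∈ S, ∀ w : Fin d → ℕ, v + w ∈ S) {N : ℕ} (hN : ∀ j, Pi.single j N ∈ S)
    (hx : ∀ i, 0 < x i) {t : ℝ} (ht : 0 < t) :
    x ∈ t • newtonPoly d S \ interior (t • newtonPoly d S) ↔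
      ∃ l ∈ facetFunctionals S, x ∈ t • compactFace S l := by
  rw [interior_smul₀ ht.ne', ← smul_set_sdiff₀ ht.ne']
  simp only [mem_smul_set_iff_inv_smul_mem₀ ht.ne']
  exact mem_newtonPoly_diff_interior_iff hS hN fun i => mul_pos (inv_pos.2 ht) (hx i)

end NewtonPolyhedron

/-! ### Lattice points on dilated facets -/

section FacePoints

variable {d : ℕ}

/-- The integral vectors of `Fin d → ℝ`, written as a span to match the lattice API. -/
abbrev integerLattice (d : ℕ) : Submodule ℤ (Fin d → ℝ) :=
  Submodule.span ℤ (range (Pi.basisFun ℝ (Fin d)))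

/-- The integral points of the dilate by `t` of the face cut out by `l`. -/
def facePoints (S : Set (Fin d → ℕ)) (l : Fin d → ℝ) (t : ℝ) : Set (Fin d → ℝ) :=
  t • compactFace S l ∩ integerLattice d

/-- The points at which `l` is the only minimizer among the functionals of the dual polyhedron.
For a facet functional `l` these form the relative interior of the cone over the facet. -/
def openCone (S : Set (Fin d → ℕ)) (l : Fin d → ℝ) : Set (Fin d → ℝ) :=
  {x | ∀ l' ∈ dualPolyhedron S, l' ≠ l → l ⬝ᵥ x < l' ⬝ᵥ x}

lemma mem_integerLattice_iff {x : Fin d → ℝ} :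
    x ∈ integerLattice d ↔ ∀ i, ∃ n : ℤ, (n : ℝ) = x i := by
  simp only [integerLattice, Module.Basis.mem_span_iff_repr_mem, Pi.basisFun_repr, mem_range,
    algebraMap_int_eq, eq_intCast]

lemma expToReal_mem_integerLattice (v : Fin d → ℕ) : expToReal d v ∈ integerLattice d :=
  mem_integerLattice_iff.2 fun i => ⟨v i, by simp [expToReal]⟩

lemma mem_range_expToReal_add_one_iff {x : Fin d → ℝ} :
    x ∈ range (fun v => expToReal d v + 1) ↔ x ∈ integerLattice d ∧ ∀ i, 0 < x i := by
  rw [mem_integerLattice_iff]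
  constructor
  · rintro ⟨v, rfl⟩
    exact ⟨fun i => ⟨v i + 1, by simp [expToReal]⟩, fun i =>
      add_pos_of_nonneg_of_pos (expToReal_nonneg v i) one_pos⟩
  · rintro ⟨hx, hpos⟩
    choose u hu using hx
    refine ⟨fun i => (u i - 1).toNat, funext fun i => ?_⟩
    have hui : 0 < u i := Int.cast_pos.1 ((hu i).symm ▸ hpos i)
    have hcast : (((u i - 1).toNat : ℤ) : ℝ) = ((u i - 1 : ℤ) : ℝ) := by
      rw [Int.toNat_of_nonneg (by omega)]
    simp only [expToReal, Pi.add_apply, Pi.one_apply, ← hu i]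
    rw [← Int.cast_natCast, hcast]
    push_cast
    ring

lemma expToReal_add_one_injective : Function.Injective fun v => expToReal d v + 1 :=
  (add_left_injective 1).comp fun _ _ h => funext fun i => Nat.cast_injective (congrFun h i)

variable {S : Set (Fin d → ℕ)} {l : Fin d → ℝ}

lemma tightExponents_subset_integerLattice (S : Set (Fin d → ℕ)) (l : Fin d → ℝ) :
    tightExponents S l ⊆ integerLattice d := by
  rintro _ ⟨⟨v, -, rfl⟩, -⟩
  exact expToReal_mem_integerLattice v

lemma dotProduct_eq_of_mem_facePoints {t : ℝ} {x : Fin d → ℝ} (hx : x ∈ facePoints S l t) :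
    l ⬝ᵥ x = t := by
  obtain ⟨⟨y, hy, rfl⟩, -⟩ := hx
  simp only [dotProduct_smul, dotProduct_eq_one_of_mem_compactFace hy, smul_eq_mul, mul_one]

lemma finite_facePoints {N : ℕ} (hN : ∀ j, Pi.single j N ∈ S) (hl : l ∈ dualPolyhedron S)
    (t : ℝ) : (facePoints S l t).Finite :=
  ZSpan.setFinite_inter _ (((finite_tightExponents hN hl).isCompact_convexHull ℝ).smul t).isBounded

lemma add_mem_facePoints {s t : ℝ} (hs : 0 ≤ s) (ht : 0 ≤ t) {x y : Fin d → ℝ}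
    (hx : x ∈ facePoints S l s) (hy : y ∈ facePoints S l t) : x + y ∈ facePoints S l (s + t) := by
  refine ⟨?_, add_mem hx.2 hy.2⟩
  rw [compactFace, (convex_convexHull ℝ _).add_smul hs ht]
  exact add_mem_add hx.1 hy.1

lemma tightExponents_nonempty_of_mem_facetFunctionals [NeZero d] (hl : l ∈ facetFunctionals S) :
    (tightExponents S l).Nonempty := by
  by_contra! h
  simpa [h] using hl.2

theorem exists_tendsto_ncard_facePoints_div_pow [NeZero d] {N : ℕ}
    (hN : ∀ j, Pi.single j N ∈ S) (hl : l ∈ facetFunctionals S) :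
    ∃ ρ : ℝ, 0 < ρ ∧ Tendsto (fun n : ℕ => ((facePoints S l n).ncard : ℝ) / (n : ℝ) ^ (d - 1))
      atTop (nhds ρ) := by
  simpa [facePoints, compactFace] using
    exists_tendsto_ncard_smul_convexHull_inter_lattice_div_pow (integerLattice d)
    (finite_tightExponents hN hl.1) (tightExponents_nonempty_of_mem_facetFunctionals hl)
    (tightExponents_subset_integerLattice S l) hl.2 (φ := dotProductBilin ℝ ℝ l) fun _ hx => hx.2

/-! ### The open cone over a facet -/

lemma pos_of_mem_openCone (hl : l ∈ dualPolyhedron S) {x : Fin d → ℝ} (hx : x ∈ openCone S l)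
    (i : Fin d) : 0 < x i := by
  have hmem : l + Pi.single i 1 ∈ dualPolyhedron S := fun v hv => by
    rw [add_dotProduct, single_dotProduct, one_mul]
    exact le_add_of_le_of_nonneg (hl v hv) (expToReal_nonneg v i)
  have hne : l + Pi.single i 1 ≠ l := by simp
  simpa [add_dotProduct] using hx _ hmem hne

lemma pairwiseDisjoint_openCone (S : Set (Fin d → ℕ)) :
    (dualPolyhedron S).PairwiseDisjoint (openCone S) := fun _ hl _ hl' hne =>
  disjoint_left.2 fun _ hx hx' => (hx _ hl' hne.symm).asymm (hx' _ hl hne)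

lemma add_mem_openCone {t : ℝ} (ht : 0 ≤ t) {x y : Fin d → ℝ} (hy : y ∈ facePoints S l t)
    (hx : x ∈ openCone S l) : y + x ∈ openCone S l := by
  intro l' hl' hne
  rw [dotProduct_add, dotProduct_add, dotProduct_eq_of_mem_facePoints hy]
  refine add_lt_add_of_le_of_lt ?_ (hx l' hl' hne)
  obtain ⟨⟨z, hz, rfl⟩, -⟩ := hy
  simpa only [dotProduct_smul, smul_eq_mul] using le_mul_of_one_le_right ht
    (one_le_dotProduct_of_mem_newtonPoly hl' (compactFace_subset_newtonPoly S l hz))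

lemma exists_basis_mem_tightExponents (hl : l ∈ facetFunctionals S) :
    ∃ b : Module.Basis (Fin d) ℝ (Fin d → ℝ), ∀ i, b i ∈ tightExponents S l := by
  let b := Module.Basis.ofSpan hl.2.ge
  refine ⟨b.reindex (b.indexEquiv (Pi.basisFun ℝ (Fin d))), fun i => ?_⟩
  rw [Module.Basis.reindex_apply]
  exact Module.Basis.ofSpan_subset hl.2.ge ⟨_, rfl⟩

lemma dotProduct_eq_sum_repr_mul {ι : Type*} [Fintype ι]
    (b : Module.Basis ι ℝ (Fin d → ℝ)) (l x : Fin d → ℝ) :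
    l ⬝ᵥ x = ∑ i, b.repr x i * (l ⬝ᵥ b i) := by
  conv_lhs => rw [← b.sum_repr x, dotProduct_sum]
  simp only [dotProduct_smul, smul_eq_mul]

lemma mem_openCone_of_repr_pos {b : Module.Basis (Fin d) ℝ (Fin d → ℝ)}
    (hb : ∀ i, b i ∈ tightExponents S l) {x : Fin d → ℝ} (hx : ∀ i, 0 < b.repr x i) :
    x ∈ openCone S l := by
  intro l' hl' hne
  have hle : ∀ i, l ⬝ᵥ b i ≤ l' ⬝ᵥ b i := fun i => by
    rw [(hb i).2]
    exact one_le_dotProduct_of_mem_newtonPoly hl' (subset_convexHull ℝ _ (hb i).1)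
  obtain ⟨i, hi⟩ : ∃ i, l' ⬝ᵥ b i ≠ l ⬝ᵥ b i := by
    by_contra! h
    exact hne (eq_of_dotProduct_eqOn_of_span_eq_top b.span_eq (forall_mem_range.2 h))
  rw [dotProduct_eq_sum_repr_mul b l, dotProduct_eq_sum_repr_mul b l']
  exact Finset.sum_lt_sum (fun j _ => mul_le_mul_of_nonneg_left (hle j) (hx j).le)
    ⟨i, Finset.mem_univ i, mul_lt_mul_of_pos_left ((hle i).lt_of_ne' hi) (hx i)⟩

lemma mem_smul_compactFace_of_repr_pos [NeZero d]
    {b : Module.Basis (Fin d) ℝ (Fin d → ℝ)} (hb : ∀ i, b i ∈ tightExponents S l) {x : Fin d → ℝ}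
    (hx : ∀ i, 0 < b.repr x i) : x ∈ (l ⬝ᵥ x) • compactFace S l := by
  have hlx : l ⬝ᵥ x = ∑ i, b.repr x i := by
    simp only [dotProduct_eq_sum_repr_mul b l x, (hb _).2, mul_one]
  have hpos : 0 < ∑ i, b.repr x i := Finset.sum_pos (fun i _ => hx i) Finset.univ_nonempty
  have hmem : Finset.univ.centerMass (b.repr x) b ∈ compactFace S l :=
    (convex_convexHull ℝ _).centerMass_mem (fun i _ => (hx i).le) hpos
      fun i _ => subset_convexHull ℝ _ (hb i)
  rw [Finset.centerMass, b.sum_repr x] at hmem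
  rwa [hlx, mem_smul_set_iff_inv_smul_mem₀ hpos.ne']

/-- The vector `w` is the sum of `d` linearly independent lattice points of the facet. -/
lemma exists_forall_eventually_add_nsmul_mem [NeZero d] (hl : l ∈ facetFunctionals S) :
    ∃ w, ∀ u ∈ integerLattice d, ∀ᶠ k : ℕ in atTop,
      u + k • w ∈ facePoints S l (l ⬝ᵥ u + (k * d : ℕ)) ∩ openCone S l := by
  obtain ⟨b, hb⟩ := exists_basis_mem_tightExponents hl
  have hw : ∑ i, b i ∈ integerLattice d :=
    sum_mem fun i _ => tightExponents_subset_integerLattice S l (hb i)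
  refine ⟨∑ i, b i, fun u hu => ?_⟩
  have hrepr : ∀ (k : ℕ) i, b.repr (u + k • ∑ j, b j) i = b.repr u i + k := fun k i => by
    simp [-nsmul_eq_mul]
  have hpos : ∀ᶠ k : ℕ in atTop, ∀ i, 0 < b.repr (u + k • ∑ j, b j) i := by
    refine eventually_all.2 fun i => ?_
    filter_upwards [tendsto_natCast_atTop_atTop.eventually_gt_atTop (-b.repr u i)] with k hk
    rw [hrepr]
    linarith
  filter_upwards [hpos] with k hk
  have hdot : l ⬝ᵥ (u + k • ∑ j, b j) = l ⬝ᵥ u + (k * d : ℕ) := by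
    rw [dotProduct_add, dotProduct_smul, dotProduct_sum]
    simp [(hb _).2]
  exact ⟨⟨hdot ▸ mem_smul_compactFace_of_repr_pos hb hk, add_mem hu (nsmul_mem hw k)⟩,
    mem_openCone_of_repr_pos hb hk⟩

lemma exists_nonempty_facePoints_add_and_sub [NeZero d] (hl : l ∈ facetFunctionals S)
    {u : Fin d → ℝ} (hu : u ∈ integerLattice d) :
    ∃ K : ℕ, |l ⬝ᵥ u| ≤ K ∧ (facePoints S l (l ⬝ᵥ u + K) ∩ openCone S l).Nonempty ∧
      (facePoints S l (K - l ⬝ᵥ u)).Nonempty := by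
  obtain ⟨w, hw⟩ := exists_forall_eventually_add_nsmul_mem hl
  obtain ⟨k, ⟨hk, hpos⟩, hneg⟩ := ((eventually_ge_atTop ⌈|l ⬝ᵥ u|⌉₊).and (hw u hu)
    |>.and (hw (-u) (neg_mem hu))).exists
  refine ⟨k * d, ?_, ⟨_, hpos⟩, ⟨-u + k • w, ?_⟩⟩
  · exact (Nat.ceil_le.1 hk).trans (Nat.cast_le.2 (Nat.le_mul_of_pos_right k (NeZero.pos d)))
  · rw [dotProduct_neg, neg_add_eq_sub] at hneg
    exact hneg.1

lemma exists_ncard_facePoints_bounds [NeZero d] {N : ℕ} (hN : ∀ j, Pi.single j N ∈ S)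
    (hl : l ∈ facetFunctionals S) {u : Fin d → ℝ} (hu : u ∈ integerLattice d) :
    ∃ K : ℕ, ∀ n ≥ K,
      (facePoints S l (n - K : ℕ)).ncard ≤ (facePoints S l (l ⬝ᵥ u + n) ∩ openCone S l).ncard ∧
      (facePoints S l (l ⬝ᵥ u + n)).ncard ≤ (facePoints S l (n + K : ℕ)).ncard := by
  obtain ⟨K, hK, ⟨p, hp, hpcone⟩, q, hq⟩ := exists_nonempty_facePoints_add_and_sub hl hu
  obtain ⟨hlow, hup⟩ := abs_le.1 hK
  refine ⟨K, fun n hn => ⟨?_, ?_⟩⟩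
  · refine ncard_le_ncard_of_injOn (· + p) (fun x hx => ?_) (add_left_injective p).injOn
      ((finite_facePoints hN hl.1 _).inter_of_left _)
    have hxp := add_mem_facePoints (Nat.cast_nonneg _) (by linarith) hx hp
    have hlevel : ((n - K : ℕ) : ℝ) + (l ⬝ᵥ u + K) = l ⬝ᵥ u + n := by
      push_cast [hn]
      ring
    exact ⟨hlevel ▸ hxp, add_mem_openCone (Nat.cast_nonneg _) hx hpcone⟩
  · refine ncard_le_ncard_of_injOn (· + q) (fun x hx => ?_) (add_left_injective q).injOn
      (finite_facePoints hN hl.1 _)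
    have hKn : (K : ℝ) ≤ n := Nat.cast_le.2 hn
    have hxq := add_mem_facePoints (by linarith) (by linarith) hx hq
    have hlevel : l ⬝ᵥ u + n + (K - l ⬝ᵥ u) = ((n + K : ℕ) : ℝ) := by
      push_cast
      ring
    exact hlevel ▸ hxq

lemma exists_mem_integerLattice_dotProduct_eq [NeZero d] (hl : l ∈ facetFunctionals S) {c : ℝ}
    {n : ℕ} (h : (facePoints S l (c + n)).Nonempty) : ∃ u ∈ integerLattice d, l ⬝ᵥ u = c := by
  obtain ⟨x, hx⟩ := h
  obtain ⟨e, he⟩ := tightExponents_nonempty_of_mem_facetFunctionals hl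
  refine ⟨x - n • e, sub_mem hx.2 (nsmul_mem (tightExponents_subset_integerLattice S l he) n), ?_⟩
  simp [-nsmul_eq_mul, dotProduct_sub, dotProduct_smul, he.2, dotProduct_eq_of_mem_facePoints hx]

end FacePoints

/-! ### Asymptotics of the multiplicities -/

lemma tendsto_comp_div_pow {f : ℕ → ℝ} {e : ℕ} {ρ : ℝ}
    (hf : Tendsto (fun n : ℕ => f n / (n : ℝ) ^ e) atTop (nhds ρ)) {a : ℕ → ℕ} {K : ℝ}
    (ha : ∀ᶠ n in atTop, |(a n : ℝ) - n| ≤ K) :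
    Tendsto (fun n : ℕ => f (a n) / (n : ℝ) ^ e) atTop (nhds ρ) := by
  have hratio : Tendsto (fun n : ℕ => (a n : ℝ) / n) atTop (nhds 1) := by
    have hdiff : Tendsto (fun n : ℕ => ((a n : ℝ) - n) / n) atTop (nhds 0) := by
      refine squeeze_zero_norm' ?_ (tendsto_const_div_atTop_nhds_zero_nat K)
      filter_upwards [ha] with n hn
      rw [norm_div, Real.norm_eq_abs, Real.norm_natCast]
      gcongr
    refine (zero_add (1 : ℝ) ▸ hdiff.add_const 1).congr' ?_
    filter_upwards [eventually_ne_atTop 0] with n hn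
    field_simp
    ring
  have ha_top : Tendsto a atTop atTop := by
    refine tendsto_natCast_atTop_iff.1 (tendsto_atTop_mono' atTop ?_
      (tendsto_atTop_add_const_right atTop (-K) tendsto_natCast_atTop_atTop))
    filter_upwards [ha] with n hn
    linarith [(abs_le.1 hn).1]
  have hlim := (hf.comp ha_top).mul (hratio.pow e)
  rw [one_pow, mul_one] at hlim
  refine hlim.congr' ?_
  filter_upwards [ha_top.eventually_ne_atTop 0] with n hn
  have hn' : (a n : ℝ) ≠ 0 := Nat.cast_ne_zero.2 hn
  simp only [Function.comp_apply]
  rw [div_pow, div_mul_div_cancel₀ (pow_ne_zero e hn')]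

section Multiplicity

variable {d : ℕ} {S : Set (Fin d → ℕ)}

theorem exists_tendsto_ncard_facePoints_add_div_pow [NeZero d] {N : ℕ}
    (hN : ∀ j, Pi.single j N ∈ S) {l : Fin d → ℝ} (hl : l ∈ facetFunctionals S)
    {u : Fin d → ℝ} (hu : u ∈ integerLattice d) :
    ∃ ρ : ℝ, 0 < ρ ∧
      Tendsto (fun n : ℕ => ((facePoints S l (l ⬝ᵥ u + n) ∩ openCone S l).ncard : ℝ) /
        (n : ℝ) ^ (d - 1)) atTop (nhds ρ) ∧
      Tendsto (fun n : ℕ => ((facePoints S l (l ⬝ᵥ u + n)).ncard : ℝ) / (n : ℝ) ^ (d - 1))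
        atTop (nhds ρ) := by
  obtain ⟨ρ, hρ, hlim⟩ := exists_tendsto_ncard_facePoints_div_pow hN hl
  obtain ⟨K, hK⟩ := exists_ncard_facePoints_bounds hN hl hu
  have hfin := finite_facePoints hN hl.1
  have hlow : Tendsto (fun n : ℕ => ((facePoints S l (n - K : ℕ)).ncard : ℝ) /
      (n : ℝ) ^ (d - 1)) atTop (nhds ρ) := by
    refine tendsto_comp_div_pow (K := K) hlim ?_
    filter_upwards [eventually_ge_atTop K] with n hn
    simp [Nat.cast_sub hn]
  have hup : Tendsto (fun n : ℕ => ((facePoints S l (n + K : ℕ)).ncard : ℝ) /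
      (n : ℝ) ^ (d - 1)) atTop (nhds ρ) :=
    tendsto_comp_div_pow (K := K) hlim (.of_forall fun n => by simp)
  refine ⟨ρ, hρ, tendsto_of_tendsto_of_tendsto_of_le_of_le' hlow hup ?_ ?_,
    tendsto_of_tendsto_of_tendsto_of_le_of_le' hlow hup ?_ ?_⟩ <;>
  filter_upwards [eventually_ge_atTop K] with n hn <;> gcongr ?_ / _ <;> norm_cast
  · exact (hK n hn).1
  · exact (ncard_le_ncard inter_subset_left (hfin _)).trans (hK n hn).2
  · exact (hK n hn).1.trans (ncard_le_ncard inter_subset_left (hfin _))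
  · exact (hK n hn).2

lemma exists_nonneg_tendsto_ncard_facePoints_add_div_pow [NeZero d] {N : ℕ}
    (hN : ∀ j, Pi.single j N ∈ S) (c : ℝ) {l : Fin d → ℝ} (hl : l ∈ facetFunctionals S) :
    ∃ ρ : ℝ, 0 ≤ ρ ∧ ((∃ n : ℕ, (facePoints S l (c + n)).Nonempty) → 0 < ρ) ∧
      Tendsto (fun n : ℕ => ((facePoints S l (c + n) ∩ openCone S l).ncard : ℝ) /
        (n : ℝ) ^ (d - 1)) atTop (nhds ρ) ∧
      Tendsto (fun n : ℕ => ((facePoints S l (c + n)).ncard : ℝ) / (n : ℝ) ^ (d - 1))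
        atTop (nhds ρ) := by
  by_cases h : ∃ n : ℕ, (facePoints S l (c + n)).Nonempty
  · obtain ⟨n, hn⟩ := h
    obtain ⟨u, hu, rfl⟩ := exists_mem_integerLattice_dotProduct_eq hl hn
    obtain ⟨ρ, hρ, hlims⟩ := exists_tendsto_ncard_facePoints_add_div_pow hN hl hu
    exact ⟨ρ, hρ.le, fun _ => hρ, hlims⟩
  · have hempty : ∀ n : ℕ, facePoints S l (c + n) = ∅ := fun n =>
      not_nonempty_iff_eq_empty.1 fun hn => h ⟨n, hn⟩
    refine ⟨0, le_rfl, fun hn => absurd hn h, ?_, ?_⟩ <;> simp [hempty]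

lemma multJump_eq_ncard [NeZero d] (hS : ∀ v ∈ S, ∀ w : Fin d → ℕ, v + w ∈ S) {N : ℕ}
    (hN : ∀ j, Pi.single j N ∈ S) {t : ℝ} (ht : 0 < t) :
    multJump d S t =
      ((⋃ l ∈ facetFunctionals S, facePoints S l t) ∩ {x | ∀ i, 0 < x i}).ncard := by
  rw [multJump, Nat.card_coe_set_eq, ← ncard_image_of_injective _ expToReal_add_one_injective]
  congr 1
  ext x
  constructor
  · rintro ⟨v, hv, rfl⟩
    obtain ⟨hlat, hpos⟩ := mem_range_expToReal_add_one_iff.1 (mem_range_self v)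
    obtain ⟨l, hl, hvl⟩ := (mem_smul_newtonPoly_diff_interior_iff hS hN hpos ht).1 hv
    exact ⟨mem_biUnion hl ⟨hvl, hlat⟩, hpos⟩
  · rintro ⟨hx, hpos⟩
    obtain ⟨l, hl, hxl, hlat⟩ := mem_iUnion₂.1 hx
    obtain ⟨v, rfl⟩ := mem_range_expToReal_add_one_iff.2 ⟨hlat, hpos⟩
    exact ⟨v, (mem_smul_newtonPoly_diff_interior_iff hS hN hpos ht).2 ⟨l, hl, hxl⟩, rfl⟩

lemma multJump_le_sum_ncard_facePoints [NeZero d] (hS : ∀ v ∈ S, ∀ w : Fin d → ℕ, v + w ∈ S)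
    {N : ℕ} (hN : ∀ j, Pi.single j N ∈ S) {t : ℝ} (ht : 0 < t) {F : Finset (Fin d → ℝ)}
    (hF : F = facetFunctionals S) : multJump d S t ≤ ∑ l ∈ F, (facePoints S l t).ncard := by
  have hfin : (⋃ l ∈ F, facePoints S l t).Finite :=
    F.finite_toSet.biUnion fun l hl => finite_facePoints hN (hF ▸ hl).1 t
  rw [multJump_eq_ncard hS hN ht, ← hF]
  exact (ncard_le_ncard inter_subset_left hfin).trans (F.set_ncard_biUnion_le _)

lemma sum_ncard_facePoints_inter_openCone_le_multJump [NeZero d]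
    (hS : ∀ v ∈ S, ∀ w : Fin d → ℕ, v + w ∈ S) {N : ℕ} (hN : ∀ j, Pi.single j N ∈ S) {t : ℝ}
    (ht : 0 < t) {F : Finset (Fin d → ℝ)} (hF : F = facetFunctionals S) :
    ∑ l ∈ F, (facePoints S l t ∩ openCone S l).ncard ≤ multJump d S t := by
  have hdual : ∀ l ∈ F, l ∈ dualPolyhedron S := fun l hl => (hF ▸ hl : l ∈ facetFunctionals S).1
  have hfin : ∀ l ∈ F, (facePoints S l t).Finite := fun l hl => finite_facePoints hN (hdual l hl) t
  have hdisj : (F : Set (Fin d → ℝ)).PairwiseDisjoint fun l => facePoints S l t ∩ openCone S l :=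
    ((pairwiseDisjoint_openCone S).subset hdual).mono fun l => inter_subset_right
  rw [multJump_eq_ncard hS hN ht, ← hF, ← finsum_mem_coe_finset,
    ← F.finite_toSet.ncard_biUnion (fun l hl => (hfin l hl).inter_of_left _) hdisj]
  refine ncard_le_ncard (iUnion₂_subset fun l hl x hx => ?_)
    ((F.finite_toSet.biUnion hfin).inter_of_left _)
  exact ⟨mem_biUnion hl hx.1, pos_of_mem_openCone (hdual l hl) hx.2⟩

lemma pos_of_multJump_pos [NeZero d] {t : ℝ} (h : 0 < multJump d S t) : 0 < t := by
  obtain ⟨⟨v, ⟨y, hy, hyv⟩, -⟩⟩ := (Nat.card_pos_iff.1 h).1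
  have hpos : 0 < t * y 0 := by
    have h0 : t * y 0 = v 0 + 1 := congrFun hyv 0
    rw [h0]
    positivity
  exact pos_of_mul_pos_left hpos (nonneg_of_mem_newtonPoly hy 0)

lemma tendsto_multJump_add_div_pow [NeZero d] (hS : ∀ v ∈ S, ∀ w : Fin d → ℕ, v + w ∈ S)
    {N : ℕ} (hN : ∀ j, Pi.single j N ∈ S) {F : Finset (Fin d → ℝ)} (hF : F = facetFunctionals S)
    {c : ℝ} {e : ℕ} {ρ : (Fin d → ℝ) → ℝ}
    (hlow : ∀ l ∈ F, Tendsto (fun n : ℕ =>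
      ((facePoints S l (c + n) ∩ openCone S l).ncard : ℝ) / (n : ℝ) ^ e) atTop (nhds (ρ l)))
    (hup : ∀ l ∈ F, Tendsto (fun n : ℕ => ((facePoints S l (c + n)).ncard : ℝ) / (n : ℝ) ^ e)
      atTop (nhds (ρ l))) :
    Tendsto (fun n : ℕ => (multJump d S (c + n) : ℝ) / (n : ℝ) ^ e) atTop
      (nhds (∑ l ∈ F, ρ l)) := by
  have hpos : ∀ᶠ n : ℕ in atTop, 0 < c + n := by
    filter_upwards [tendsto_natCast_atTop_atTop.eventually_gt_atTop (-c)] with n hn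
    linarith
  refine tendsto_of_tendsto_of_tendsto_of_le_of_le' (tendsto_finsetSum F hlow)
    (tendsto_finsetSum F hup) ?_ ?_ <;>
  filter_upwards [hpos] with n hn <;> rw [← Finset.sum_div] <;> gcongr ?_ / _ <;> norm_cast
  · exact sum_ncard_facePoints_inter_openCone_le_multJump hS hN hn hF
  · exact multJump_le_sum_ncard_facePoints hS hN hn hF

lemma exists_facetFunctional_of_multJump_pos [NeZero d]
    (hS : ∀ v ∈ S, ∀ w : Fin d → ℕ, v + w ∈ S) {N : ℕ} (hN : ∀ j, Pi.single j N ∈ S) {t : ℝ}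
    (h : 0 < multJump d S t) : ∃ l ∈ facetFunctionals S, (facePoints S l t).Nonempty := by
  rw [multJump_eq_ncard hS hN (pos_of_multJump_pos h)] at h
  obtain ⟨x, hx, -⟩ := nonempty_of_ncard_ne_zero h.ne'
  obtain ⟨l, hl, hxl⟩ := mem_iUnion₂.1 hx
  exact ⟨l, hl, x, hxl⟩

end Multiplicity

theorem rees_coefficient_positive_of_monomial_general {d : ℕ} [NeZero d] {S : Set (Fin d → ℕ)}
    (hS : ∀ v ∈ S, ∀ w : Fin d → ℕ, v + w ∈ S) (hcof : Sᶜ.Finite) {c : ℝ} {n₀ : ℕ}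
    (hjump : 0 < multJump d S (c + n₀)) :
    ∃ ρ : ℝ, 0 < ρ ∧
      Tendsto (fun n : ℕ => (multJump d S (c + n) : ℝ) / (n : ℝ) ^ (d - 1)) atTop (nhds ρ) := by
  obtain ⟨N, hN⟩ := exists_pi_single_mem_of_finite_compl hcof
  obtain ⟨F, hF⟩ := (finite_facetFunctionals hN).exists_finset_coe
  have hfacet : ∀ l ∈ F, l ∈ facetFunctionals S := fun l hl => hF ▸ hl
  choose! ρ hρ hρpos hlow hup using fun l (hl : l ∈ F) =>
    exists_nonneg_tendsto_ncard_facePoints_add_div_pow hN c (hfacet l hl)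
  obtain ⟨l, hl, hne⟩ := exists_facetFunctional_of_multJump_pos hS hN hjump
  have hlF : l ∈ F := Finset.mem_coe.1 (hF ▸ hl)
  exact ⟨∑ l ∈ F, ρ l, Finset.sum_pos' hρ ⟨l, hlF, hρpos l hlF ⟨n₀, hne⟩⟩,
    tendsto_multJump_add_div_pow hS hN hF hlow hup⟩

/-- Corollary 5.4 (monomial case): for every jumping number `c` of a cofinite monomial
ideal `𝔞 ⊆ k[x₁,…,x_d]`, the sequence `m(c+n)/n^(d-1)` converges to a strictly positive
limit `ρ_c` (the Rees coefficient of `c` is positive). -/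
theorem rees_coefficient_positive_of_monomial (d : ℕ) (hd : 1 ≤ d) (k : Type*) [Field k]
    (S : Set (Fin d → ℕ)) (hS : ∀ v ∈ S, ∀ w : Fin d → ℕ, v + w ∈ S)
    (hcof : (Sᶜ : Set (Fin d → ℕ)).Finite)
    (c : ℚ) (hc : 0 < c) (hjump : 0 < multJump d S (c : ℝ)) :
    ∃ ρ : ℝ, 0 < ρ ∧
      Tendsto (fun n : ℕ => (multJump d S ((c : ℝ) + n) : ℝ) / (n : ℝ) ^ (d - 1))
        atTop (nhds ρ) := by
  have : NeZero d := NeZero.of_pos hd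
  exact rees_coefficient_positive_of_monomial_general (n₀ := 0) hS hcof (by simpa using hjump)
end
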